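/- arXiv:math/0301245 — 2 statements merged into one kernel-verified Lean document; each statement's English description precedes it below -/
import Mathlib

section
/- (Lemma 4) The function r̂(ζ) := r(ζ)·√ζ on (0,∞) has exactly one critical point (i.e. exactly one ζ > 0 with r̂'(ζ) = 0), and at this point r̂ attains its global maximum over (0,∞). -/
open SimpleGraph

/-- A rooted tree on vertex set `Fin n`: a connected acyclic simple graph
with a distinguished root vertex. -/
structure RTree (n : ℕ) where
  adj : SimpleGraph (Fin n)
  connected : adj.Connected
  acyclic : adj.IsAcyclic
  root : Fin n

/-- `v` is a leaf of the rooted tree `t`: a vertex of degree one other than the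
root, except that in the one-vertex tree the root counts as a leaf. -/
def IsLeafV {n : ℕ} (t : RTree n) (v : Fin n) : Prop :=
  n = 1 ∨ ((t.adj.neighborSet v).ncard = 1 ∧ v ≠ t.root)

/-- The number of leaves of a rooted tree. -/
noncomputable def numLeaves {n : ℕ} (t : RTree n) : ℕ :=
  Nat.card {v : Fin n // IsLeafV t v}

/-- Root-preserving isomorphism of rooted trees. -/
def treeSetoid (n : ℕ) : Setoid (RTree n) where
  r t t' := ∃ e : t.adj ≃g t'.adj, e t.root = t'.root
  iseqv := by
    constructor
    · intro t; exact ⟨RelIso.refl _, rfl⟩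
    · rintro t t' ⟨e, he⟩
      exact ⟨e.symm, by rw [← he]; exact e.symm_apply_apply t.root⟩
    · rintro a b c ⟨e, he⟩ ⟨f, hf⟩
      exact ⟨e.trans f, by simp [RelIso.trans_apply, he, hf]⟩

/-- `aCount n k` : the number of isomorphism classes of rooted trees with `n`
vertices and exactly `k` leaves. -/
noncomputable def aCount (n k : ℕ) : ℕ :=
  Nat.card (Quotient (Setoid.comap
    (Subtype.val : {t : RTree n // numLeaves t = k} → RTree n)
    (treeSetoid n)))

/-- The real bivariate generating function `T(x,z) = Σ_{n,k} a_{n,k} x^n z^k`. -/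
noncomputable def Treal (x z : ℝ) : ℝ :=
  ∑' p : ℕ × ℕ, (aCount p.1 p.2 : ℝ) * x ^ p.1 * z ^ p.2

/-- `r(ζ)`, the radius of convergence in `x` of `T(x,ζ)` for `ζ > 0`. -/
noncomputable def rFun (ζ : ℝ) : ℝ :=
  sSup {x : ℝ | 0 < x ∧
    Summable (fun p : ℕ × ℕ => (aCount p.1 p.2 : ℝ) * x ^ p.1 * ζ ^ p.2)}

/-- `r̂(ζ) = r(ζ)·√ζ`. -/
noncomputable def rhat (ζ : ℝ) : ℝ := rFun ζ * Real.sqrt ζ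

/-!
Removing the root of a tree leaves an arbitrary multiset of trees, so `y = T(x, z) - x (z - 1)`
satisfies Pólya's equation `y = x exp (∑_{i ≥ 1} T(x ^ i, z ^ i) / i)`. Separating the term `i = 1`
turns it into `log y - (y - 1) = E`, where `E` involves only `log x`, `x (z - 1)` and the terms
`i ≥ 2`, which stay differentiable at and beyond the radius of convergence. Since `log y ≤ y - 1`,
convergence forces `E ≤ 0`. Conversely, `E ≤ 0` implies convergence as long as the terms `i ≥ 2`
converge. Hence `x = r z` is the curve `E = 0`, on which `y = 1`.

All coefficients of `y` are nonnegative, because the one-vertex tree contributes `x` in place of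
`x z`. Hence `y` is a strictly convex function of `(log z, log x)`, and its level curve `y = 1` is
the graph of a strictly concave function `log r` of `log z`, which is differentiable by implicit
differentiation of `E = 0`. Finally `log r̂ = log r + (log z) / 2` is bounded above by
`-|log z| / 2`, as paths and stars force `x < 1` and `x z < 1`. A strictly concave differentiable
function tending to `-∞` at both ends has a unique critical point, its maximum.
-/

section Grafting

variable {ι : Type*} {V : ι → Type*}

/-- The adjacency relation of `graftGraph`. -/
inductive GraftAdj (G : ∀ i, SimpleGraph (V i)) (r : ∀ i, V i) :
    Option (Σ i, V i) → Option (Σ i, V i) → Prop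
  | up (i : ι) : GraftAdj G r none (some ⟨i, r i⟩)
  | down (i : ι) : GraftAdj G r (some ⟨i, r i⟩) none
  | inner (i : ι) {v w : V i} (h : (G i).Adj v w) : GraftAdj G r (some ⟨i, v⟩) (some ⟨i, w⟩)

/-- The grafting of a family of rooted graphs `(G i, r i)`: their disjoint union together with a
new vertex `none`, the new root, joined to all the old roots `r i`. -/
def graftGraph (G : ∀ i, SimpleGraph (V i)) (r : ∀ i, V i) :
    SimpleGraph (Option (Σ i, V i)) where
  Adj := GraftAdj G r
  symm := ⟨by rintro _ _ (i | i | ⟨i, h⟩); exacts [.down i, .up i, .inner i h.symm]⟩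
  loopless := ⟨by rintro (_ | _) h <;> cases h; exact (G _).irrefl ‹_›⟩

variable {G : ∀ i, SimpleGraph (V i)} {r : ∀ i, V i}

lemma graftGraph_adj_some_iff {i : ι} {v w : V i} :
    (graftGraph G r).Adj (some ⟨i, v⟩) (some ⟨i, w⟩) ↔ (G i).Adj v w :=
  ⟨fun h ↦ by cases h; assumption, .inner i⟩

lemma eq_of_graftGraph_adj_some {i j : ι} {v : V i} {w : V j}
    (h : (graftGraph G r).Adj (some ⟨i, v⟩) (some ⟨j, w⟩)) : i = j := by
  cases h; rfl

lemma graftGraph_adj_none_some_iff {i : ι} {v : V i} :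
    (graftGraph G r).Adj none (some ⟨i, v⟩) ↔ v = r i :=
  ⟨fun h ↦ by cases h; rfl, by rintro rfl; exact .up i⟩

lemma graftGraph_adj_some_none_iff {i : ι} {v : V i} :
    (graftGraph G r).Adj (some ⟨i, v⟩) none ↔ v = r i := by
  rw [adj_comm, graftGraph_adj_none_some_iff]

/-- The inclusion of one of the grafted graphs. -/
def graftHom (G : ∀ i, SimpleGraph (V i)) (r : ∀ i, V i) (i : ι) : G i →g graftGraph G r where
  toFun v := some ⟨i, v⟩
  map_rel' := .inner i

lemma graftHom_injective (i : ι) : Function.Injective (graftHom G r i) :=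
  (Option.some_injective _).comp sigma_mk_injective

lemma graftGraph_connected (hG : ∀ i, (G i).Connected) : (graftGraph G r).Connected := by
  have reachable_none : ∀ a, (graftGraph G r).Reachable none a := by
    rintro (_ | ⟨i, v⟩)
    · exact .refl _
    · have root_reachable := ((hG i).preconnected (r i) v).map (graftHom G r i)
      exact (graftGraph_adj_none_some_iff.2 rfl).reachable.trans root_reachable
  exact ⟨fun a b ↦ (reachable_none a).symm.trans (reachable_none b)⟩

/-- Sends the extra element `none` over `i` to the edge joining `r i` to the new root, and every
edge of `G i` to its copy in the grafting. -/
def graftEdge (G : ∀ i, SimpleGraph (V i)) (r : ∀ i, V i) :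
    (Σ i, Option (G i).edgeSet) → (graftGraph G r).edgeSet
  | ⟨i, none⟩ => ⟨s(none, some ⟨i, r i⟩), .up i⟩
  | ⟨i, some e⟩ => (graftHom G r i).mapEdgeSet e

lemma graftEdge_surjective : Function.Surjective (graftEdge G r) := by
  rintro ⟨e, he⟩
  induction e with
  | _ a b =>
    cases (he : GraftAdj G r a b) with
    | up i => exact ⟨⟨i, none⟩, rfl⟩
    | down i => exact ⟨⟨i, none⟩, Subtype.ext Sym2.eq_swap⟩
    | inner i h => exact ⟨⟨i, some ⟨s(_, _), h⟩⟩, rfl⟩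

lemma graftGraph_isTree [Finite ι] [∀ i, Finite (V i)] (hG : ∀ i, (G i).IsTree) :
    (graftGraph G r).IsTree := by
  classical
  have := Fintype.ofFinite ι
  have hconn : (graftGraph G r).Connected := graftGraph_connected fun i ↦ (hG i).connected
  have card_edges : Nat.card (Σ i, Option (G i).edgeSet) = Nat.card (Σ i, V i) := by
    simp only [Nat.card_sigma, Finite.card_option, (isTree_iff_connected_and_card.1 (hG _)).2]
  have edges_le := Nat.card_le_card_of_surjective _ (graftEdge_surjective (G := G) (r := r))
  refine isTree_iff_connected_and_card.2
    ⟨hconn, le_antisymm ?_ hconn.card_vert_le_card_edgeSet_add_one⟩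
  rw [Finite.card_option, ← card_edges]
  lia

end Grafting

/-- The rooted graphs `(G, r)` and `(H, s)` are isomorphic. -/
def RootedIso {V W : Type*} (G : SimpleGraph V) (r : V) (H : SimpleGraph W) (s : W) : Prop :=
  ∃ e : G ≃g H, e r = s

namespace RootedIso

variable {V W X : Type*} {G : SimpleGraph V} {r : V} {H : SimpleGraph W} {s : W}
  {K : SimpleGraph X} {t : X}

protected lemma refl (G : SimpleGraph V) (r : V) : RootedIso G r G r := ⟨.refl, rfl⟩

protected lemma symm (h : RootedIso G r H s) : RootedIso H s G r := by
  obtain ⟨e, rfl⟩ := h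
  exact ⟨e.symm, e.symm_apply_apply r⟩

protected lemma trans (h : RootedIso G r H s) (h' : RootedIso H s K t) : RootedIso G r K t := by
  obtain ⟨e, rfl⟩ := h
  obtain ⟨f, rfl⟩ := h'
  exact ⟨e.trans f, rfl⟩

end RootedIso

section GraftIso

variable {ι ι' : Type*} {V : ι → Type*} {V' : ι' → Type*}
  {G : ∀ i, SimpleGraph (V i)} {r : ∀ i, V i} {G' : ∀ i, SimpleGraph (V' i)} {r' : ∀ i, V' i}

lemma rootedIso_graftGraph (σ : ι ≃ ι') (h : ∀ i, RootedIso (G i) (r i) (G' (σ i)) (r' (σ i))) :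
    RootedIso (graftGraph G r) none (graftGraph G' r') none := by
  choose e he using h
  let E : (Σ i, V i) ≃ Σ i, V' i := Equiv.sigmaCongr σ fun i ↦ (e i).toEquiv
  have hE : ∀ i v, E ⟨i, v⟩ = ⟨σ i, e i v⟩ := fun i v ↦ rfl
  have root_iff : ∀ i v, e i v = r' (σ i) ↔ v = r i := fun i v ↦ by
    rw [← he i, (e i).injective.eq_iff]
  refine ⟨⟨E.optionCongr, ?_⟩, rfl⟩
  rintro (_ | ⟨i, v⟩) (_ | ⟨j, w⟩) <;>
    simp only [Equiv.optionCongr_apply, Option.map_none, Option.map_some, hE,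
      graftGraph_adj_none_some_iff, graftGraph_adj_some_none_iff, root_iff, SimpleGraph.irrefl]
  constructor <;> intro h
  · obtain rfl : i = j := σ.injective (eq_of_graftGraph_adj_some h)
    rw [graftGraph_adj_some_iff] at h ⊢
    exact (e i).map_adj_iff.1 h
  · obtain rfl : i = j := eq_of_graftGraph_adj_some h
    rw [graftGraph_adj_some_iff] at h ⊢
    exact (e i).map_adj_iff.2 h

/-- The new root is the only vertex linking different grafted graphs, so an injective homomorphism
fixing it maps each grafted graph into a single one. -/
lemma exists_index_of_graftGraph_hom (hG : ∀ i, (G i).Connected)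
    (e : graftGraph G r →g graftGraph G' r') (e_inj : Function.Injective e) (he : e none = none) :
    ∃ (σ : ι → ι') (φ : ∀ i, V i → V' (σ i)),
      (∀ i v, e (some ⟨i, v⟩) = some ⟨σ i, φ i v⟩) ∧ ∀ i, φ i (r i) = r' (σ i) := by
  have root_image : ∀ i, ∃ j, e (some ⟨i, r i⟩) = some ⟨j, r' j⟩ := by
    intro i
    have h := e.map_adj (show (graftGraph G r).Adj none (some ⟨i, r i⟩) from .up i)
    rw [he] at h
    generalize e (some ⟨i, r i⟩) = b at h
    cases h with
    | up j => exact ⟨j, rfl⟩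
  choose σ hσ using root_image
  have vertex_image : ∀ i v, ∃ w, e (some ⟨i, v⟩) = some ⟨σ i, w⟩ := by
    intro i v
    induction (reachable_iff_reflTransGen _ _).1 ((hG i).preconnected (r i) v) with
    | refl => exact ⟨_, hσ i⟩
    | @tail v w _ hvw ih =>
      obtain ⟨x, hx⟩ := ih
      have h := e.map_adj (graftGraph_adj_some_iff (r := r).2 hvw)
      rcases hw : e (some ⟨i, w⟩) with _ | ⟨j, y⟩
      · exact absurd (e_inj (hw.trans he.symm)) (Option.some_ne_none _)
      · rw [hx, hw] at h
        obtain rfl := eq_of_graftGraph_adj_some h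
        exact ⟨y, rfl⟩
  choose φ hφ using vertex_image
  refine ⟨σ, φ, hφ, fun i ↦ ?_⟩
  simpa using (hφ i (r i)).symm.trans (hσ i)

lemma exists_equiv_of_rootedIso_graftGraph (hG : ∀ i, (G i).Connected)
    (h : RootedIso (graftGraph G r) none (graftGraph G' r') none) :
    ∃ σ : ι ≃ ι', ∀ i, RootedIso (G i) (r i) (G' (σ i)) (r' (σ i)) := by
  obtain ⟨e, he⟩ := h
  obtain ⟨σ, φ, hφ, φ_root⟩ := exists_index_of_graftGraph_hom hG e.toHom e.injective he
  replace hφ : ∀ i v, e (some ⟨i, v⟩) = some ⟨σ i, φ i v⟩ := hφ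
  have exists_preimage : ∀ j w, ∃ i v, (⟨σ i, φ i v⟩ : Σ j, V' j) = ⟨j, w⟩ := by
    intro j w
    obtain ⟨_ | ⟨i, v⟩, ha⟩ := e.surjective (some ⟨j, w⟩)
    · simp [he] at ha
    · exact ⟨i, v, Option.some_injective _ ((hφ i v).symm.trans ha)⟩
  have σ_inj : Function.Injective σ := by
    intro i j hij
    have : e (some ⟨i, r i⟩) = e (some ⟨j, r j⟩) := by rw [hφ, hφ, φ_root, φ_root, hij]
    simpa using congrArg (Option.map Sigma.fst) (e.injective this)
  have σ_surj : Function.Surjective σ := fun j ↦ by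
    obtain ⟨i, v, h⟩ := exists_preimage j (r' j)
    exact ⟨i, congrArg Sigma.fst h⟩
  have φ_inj : ∀ i, Function.Injective (φ i) := by
    intro i v w hvw
    have : e (some ⟨i, v⟩) = e (some ⟨i, w⟩) := by rw [hφ, hφ, hvw]
    simpa using e.injective this
  have φ_surj : ∀ i, Function.Surjective (φ i) := by
    intro i w
    obtain ⟨j, v, h⟩ := exists_preimage (σ i) w
    obtain rfl := σ_inj (congrArg Sigma.fst h)
    exact ⟨v, sigma_mk_injective h⟩
  refine ⟨.ofBijective σ ⟨σ_inj, σ_surj⟩, fun i ↦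
    ⟨⟨.ofBijective (φ i) ⟨φ_inj i, φ_surj i⟩, fun {v w} ↦ ?_⟩, φ_root i⟩⟩
  change (G' (σ i)).Adj (φ i v) (φ i w) ↔ _
  rw [← graftGraph_adj_some_iff (r := r'), ← hφ, ← hφ, e.map_adj_iff, graftGraph_adj_some_iff]

end GraftIso

section Leaves

/-- The notion `IsLeafV` of a leaf, for a graph on an arbitrary vertex type rooted at `r`. -/
def IsLeafAt {V : Type*} (G : SimpleGraph V) (r v : V) : Prop :=
  Nat.card V = 1 ∨ ((G.neighborSet v).ncard = 1 ∧ v ≠ r)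

lemma RootedIso.card_isLeafAt_eq {V W : Type*} {G : SimpleGraph V} {r : V} {H : SimpleGraph W}
    {s : W} (h : RootedIso G r H s) :
    Nat.card {v // IsLeafAt G r v} = Nat.card {v // IsLeafAt H s v} := by
  obtain ⟨e, rfl⟩ := h
  refine Nat.card_congr (e.toEquiv.subtypeEquiv fun v ↦ ?_)
  have ncard_eq : (G.neighborSet v).ncard = (H.neighborSet (e v)).ncard :=
    Nat.card_congr (e.mapNeighborSet v)
  rw [IsLeafAt, IsLeafAt, ncard_eq, Nat.card_congr e.toEquiv, ← e.injective.ne_iff]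
  rfl

lemma ncard_neighborSet_eq_zero_iff_of_connected {V : Type*} [Finite V] {G : SimpleGraph V}
    (hG : G.Connected) (v : V) : (G.neighborSet v).ncard = 0 ↔ Nat.card V = 1 := by
  rw [Set.ncard_eq_zero, Nat.card_eq_one_iff_unique]
  refine ⟨fun h ↦ ⟨?_, ⟨v⟩⟩, fun ⟨_, _⟩ ↦ ?_⟩
  · by_contra hV
    rw [not_subsingleton_iff_nontrivial] at hV
    obtain ⟨w, hw⟩ := hG.preconnected.exists_adj_of_nontrivial v
    exact Set.eq_empty_iff_forall_notMem.1 h w hw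
  · refine Set.eq_empty_of_forall_notMem fun w hw ↦ G.irrefl (v := v) ?_
    rwa [mem_neighborSet, Subsingleton.elim w v] at hw

variable {ι : Type*} {V : ι → Type*} {G : ∀ i, SimpleGraph (V i)} {r : ∀ i, V i}

lemma some_mem_neighborSet_graftGraph_iff {i : ι} {v : V i} {a : Σ i, V i} :
    some a ∈ (graftGraph G r).neighborSet (some ⟨i, v⟩) ↔
      some a ∈ graftHom G r i '' (G i).neighborSet v := by
  obtain ⟨j, w⟩ := a
  constructor
  · intro h
    obtain rfl := eq_of_graftGraph_adj_some h
    exact ⟨w, graftGraph_adj_some_iff.1 h, rfl⟩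
  · rintro ⟨x, hx, h⟩
    rw [← h]
    exact graftGraph_adj_some_iff.2 hx

lemma neighborSet_graftGraph_root (i : ι) :
    (graftGraph G r).neighborSet (some ⟨i, r i⟩) =
      insert none (graftHom G r i '' (G i).neighborSet (r i)) := by
  ext (_ | a)
  · simp [graftGraph_adj_some_none_iff]
  · rw [some_mem_neighborSet_graftGraph_iff, Set.mem_insert_iff, or_iff_right (by simp)]

lemma neighborSet_graftGraph_of_ne_root {i : ι} {v : V i} (hv : v ≠ r i) :
    (graftGraph G r).neighborSet (some ⟨i, v⟩) = graftHom G r i '' (G i).neighborSet v := by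
  ext (_ | a)
  · simp [graftGraph_adj_some_none_iff, hv, graftHom]
  · exact some_mem_neighborSet_graftGraph_iff

lemma card_option_ne_one {α : Type*} [Nonempty α] : Nat.card (Option α) ≠ 1 := fun h ↦
  not_subsingleton _ (Nat.card_eq_one_iff_unique.1 h).1

lemma isLeafAt_graftGraph_some_iff [∀ i, Finite (V i)] (hG : ∀ i, (G i).Connected) (i : ι)
    (v : V i) : IsLeafAt (graftGraph G r) none (some ⟨i, v⟩) ↔ IsLeafAt (G i) (r i) v := by
  have : Nonempty (Σ i, V i) := ⟨i, v⟩
  rw [IsLeafAt, IsLeafAt, or_iff_right card_option_ne_one, and_iff_left (Option.some_ne_none _)]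
  by_cases hv : v = r i
  · subst hv
    rw [neighborSet_graftGraph_root, Set.ncard_insert_of_notMem (by simp [graftHom]),
      Set.ncard_image_of_injective _ (graftHom_injective i), Nat.add_eq_right,
      ncard_neighborSet_eq_zero_iff_of_connected (hG i)]
    simp only [ne_eq, not_true_eq_false, and_false, or_false]
  · have card_ne_one : Nat.card (V i) ≠ 1 := fun h ↦
      hv ((Nat.card_eq_one_iff_unique.1 h).1.elim _ _)
    rw [neighborSet_graftGraph_of_ne_root hv,
      Set.ncard_image_of_injective _ (graftHom_injective i), or_iff_right card_ne_one,
      and_iff_left hv]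

lemma card_isLeafAt_graftGraph_of_isEmpty [IsEmpty ι] :
    Nat.card {v // IsLeafAt (graftGraph G r) none v} = 1 := by
  have card_eq_one : Nat.card (Option (Σ i, V i)) = 1 := by simp
  rw [← card_eq_one]
  exact Nat.card_congr (.subtypeUnivEquiv fun v ↦ .inl card_eq_one)

lemma card_isLeafAt_graftGraph [Fintype ι] [Nonempty ι] [∀ i, Finite (V i)]
    (hG : ∀ i, (G i).Connected) :
    Nat.card {v // IsLeafAt (graftGraph G r) none v} =
      ∑ i, Nat.card {v // IsLeafAt (G i) (r i) v} := by
  obtain ⟨i₀⟩ := ‹Nonempty ι›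
  have : Nonempty (Σ i, V i) := ⟨i₀, r i₀⟩
  rw [← Nat.card_sigma]
  let f (p : Σ i, {v // IsLeafAt (G i) (r i) v}) : {v // IsLeafAt (graftGraph G r) none v} :=
    ⟨some ⟨p.1, p.2.1⟩, (isLeafAt_graftGraph_some_iff hG _ _).2 p.2.2⟩
  refine (Nat.card_congr (.ofBijective f ⟨?_, ?_⟩)).symm
  · rintro ⟨i, v, hv⟩ ⟨j, w, hw⟩ h
    cases h
    rfl
  · rintro ⟨_ | ⟨i, v⟩, h⟩
    · exact absurd rfl (h.resolve_left card_option_ne_one).2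
    · exact ⟨⟨i, v, (isLeafAt_graftGraph_some_iff hG _ _).1 h⟩, rfl⟩

end Leaves

section Decomposition

variable {V : Type*} (G : SimpleGraph V) (r : V)

/-- The graph obtained by deleting the root. -/
abbrev rootComplement : SimpleGraph {v | v ≠ r} := G.induce {v | v ≠ r}

variable {G r}

lemma exists_adj_reachable_rootComplement (hG : G.Connected) (v : {v | v ≠ r}) :
    ∃ w : {v | v ≠ r}, G.Adj r w ∧ (rootComplement G r).Reachable w v := by
  obtain ⟨v, hv⟩ := v
  obtain ⟨p, hp⟩ := (hG.preconnected r v).exists_isPath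
  cases p with
  | nil => exact absurd rfl hv
  | cons hadj q =>
    obtain ⟨-, hr⟩ := (Walk.cons_isPath_iff _ _).1 hp
    have hq : ∀ x ∈ q.support, x ∈ {v | v ≠ r} := fun x hx hxr ↦ hr (hxr ▸ hx)
    exact ⟨⟨_, hq _ q.start_mem_support⟩, hadj, (q.induce _ hq).reachable⟩

/-- Two neighbours of the root linked away from the root would close a cycle. -/
lemma eq_of_adj_root_of_reachable_rootComplement (hG : G.IsAcyclic) {v w : {v | v ≠ r}}
    (hv : G.Adj r v) (hw : G.Adj r w) (h : (rootComplement G r).Reachable v w) : v = w := by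
  obtain ⟨p, hp⟩ := h.exists_isPath
  let f : rootComplement G r →g G := (Embedding.induce _).toHom
  have hf : Function.Injective f := Subtype.val_injective
  have hr : r ∉ (p.map f).support := by
    rw [Walk.support_map, List.mem_map]
    rintro ⟨x, -, hx⟩
    exact x.2 hx
  have hpath : (Walk.cons (show G.Adj r (f v) from hv) (p.map f)).IsPath :=
    (Walk.cons_isPath_iff _ _).2 ⟨hp.map hf, hr⟩
  have := hG.eq_snd_of_adj_start hpath hw (Walk.end_mem_support _)
  exact Subtype.ext (this.trans (Walk.snd_cons _ _)).symm

variable (G r) in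
/-- The vertices of `G`, sorted into the root and the components of its complement. -/
def ofRootComplement : Option (Σ c : (rootComplement G r).ConnectedComponent, c) → V
  | none => r
  | some ⟨_, v⟩ => v.1.1

lemma ofRootComplement_bijective : Function.Bijective (ofRootComplement G r) := by
  constructor
  · rintro (_ | ⟨c, v, hv⟩) (_ | ⟨d, w, hw⟩) h
    · rfl
    · exact absurd h.symm w.2
    · exact absurd h v.2
    · obtain rfl : v = w := Subtype.ext h
      obtain rfl : c = d := hv.symm.trans hw
      rfl
  · intro v
    by_cases hv : v = r
    · exact ⟨none, hv.symm⟩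
    · exact ⟨some ⟨(rootComplement G r).connectedComponentMk ⟨v, hv⟩, ⟨v, hv⟩, rfl⟩, rfl⟩

lemma rootedIso_graftGraph_rootComplement (hG : G.IsAcyclic)
    (s : ∀ c : (rootComplement G r).ConnectedComponent, c) (hs : ∀ c, G.Adj r (s c).1) :
    RootedIso (graftGraph (fun c ↦ c.toSimpleGraph) s) none G r := by
  have eq_root_iff : ∀ (c : (rootComplement G r).ConnectedComponent) (v : c),
      v = s c ↔ G.Adj r v.1 := by
    refine fun c v ↦ ⟨fun h ↦ h ▸ hs c, fun h ↦ Subtype.ext ?_⟩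
    exact eq_of_adj_root_of_reachable_rootComplement hG h (hs c)
      (ConnectedComponent.exact (v.2.trans (s c).2.symm))
  refine ⟨⟨.ofBijective _ ofRootComplement_bijective, fun {a b} ↦ ?_⟩, rfl⟩
  change G.Adj (ofRootComplement G r a) (ofRootComplement G r b) ↔ _
  rcases a with _ | ⟨c, v⟩ <;> rcases b with _ | ⟨d, w⟩
  · exact iff_of_false G.irrefl (SimpleGraph.irrefl _)
  · rw [graftGraph_adj_none_some_iff, eq_root_iff]
    rfl
  · rw [graftGraph_adj_some_none_iff, eq_root_iff, adj_comm]
    rfl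
  · constructor
    · intro h
      have hadj : (rootComplement G r).Adj v.1 w.1 := h
      obtain rfl : c = d := by
        rw [← v.2, ← w.2]
        exact ConnectedComponent.sound hadj.reachable
      exact graftGraph_adj_some_iff.2 h
    · intro h
      obtain rfl := eq_of_graftGraph_adj_some h
      exact graftGraph_adj_some_iff.1 h

end Decomposition

section IsoClasses

/-- A rooted tree with any number of vertices. -/
abbrev SizedRTree : Type := Σ n, RTree n

lemma RTree.isTree {n : ℕ} (t : RTree n) : t.adj.IsTree := ⟨t.connected, t.acyclic⟩

instance (n : ℕ) : Finite (RTree n) := by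
  refine Finite.of_injective (fun t : RTree n ↦ (t.adj, t.root)) ?_
  rintro ⟨_, _, _, _⟩ ⟨_, _, _, _⟩ h
  cases h
  rfl

lemma numLeaves_eq_card_isLeafAt {n : ℕ} (t : RTree n) :
    numLeaves t = Nat.card {v // IsLeafAt t.adj t.root v} := by
  simp only [numLeaves, IsLeafV, IsLeafAt, Nat.card_eq_fintype_card, Fintype.card_fin]

lemma exists_rTree_rootedIso {V : Type*} [Finite V] {G : SimpleGraph V} (hG : G.IsTree) (r : V) :
    ∃ t : RTree (Nat.card V), RootedIso t.adj t.root G r := by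
  let e := Finite.equivFin V
  let I : G.comap e.symm ≃g G := SimpleGraph.Iso.comap e.symm G
  have hI := I.isTree_iff.2 hG
  exact ⟨⟨G.comap e.symm, hI.connected, hI.isAcyclic, e r⟩, I, e.symm_apply_apply r⟩

variable {ι ι' : Type*}

lemma exists_graftTree [Finite ι] (t : ι → SizedRTree) :
    ∃ s : RTree (Nat.card (Option (Σ i, Fin (t i).1))), RootedIso s.adj s.root
      (graftGraph (fun i ↦ (t i).2.adj) fun i ↦ (t i).2.root) none :=
  exists_rTree_rootedIso (graftGraph_isTree fun i ↦ (t i).2.isTree) none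

/-- The grafting of a family of rooted trees, transported to a vertex set `Fin n`. -/
noncomputable def graftTree [Finite ι] (t : ι → SizedRTree) : SizedRTree :=
  ⟨_, (exists_graftTree t).choose⟩

lemma rootedIso_graftTree [Finite ι] (t : ι → SizedRTree) :
    RootedIso (graftTree t).2.adj (graftTree t).2.root
      (graftGraph (fun i ↦ (t i).2.adj) fun i ↦ (t i).2.root) none :=
  (exists_graftTree t).choose_spec

lemma map_univ_val_eq_iff_exists_equiv {β : Type*} [Fintype ι] [Fintype ι'] {f : ι → β}
    {g : ι' → β} :
    Finset.univ.val.map f = Finset.univ.val.map g ↔ ∃ σ : ι ≃ ι', ∀ i, f i = g (σ i) := by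
  classical
  constructor
  · intro h
    have fiber_equiv : ∀ b, Nonempty ({i // f i = b} ≃ {i // g i = b}) := by
      intro b
      have count_eq := congrArg (Multiset.count b) h
      rw [Multiset.count_map, Multiset.count_map] at count_eq
      refine ⟨Fintype.equivOfCardEq ?_⟩
      rw [Fintype.card_subtype, Fintype.card_subtype]
      simp only [eq_comm (b := b)]
      exact count_eq
    let σ := (Equiv.sigmaFiberEquiv f).symm.trans
      ((Equiv.sigmaCongrRight fun b ↦ (fiber_equiv b).some).trans (Equiv.sigmaFiberEquiv g))
    exact ⟨σ, fun i ↦ ((fiber_equiv (f i)).some ⟨i, rfl⟩).2.symm⟩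
  · rintro ⟨σ, h⟩
    rw [← Finset.map_univ_equiv σ, Finset.map_val, Multiset.map_map]
    exact Multiset.map_congr rfl fun i _ ↦ h i

lemma summable_card_fiber_mul_iff {U β : Type*} {φ : U → β} [∀ b, Finite {u // φ u = b}]
    {f : β → ℝ} (hf : ∀ b, 0 ≤ f b) :
    Summable (fun b ↦ Nat.card {u // φ u = b} * f b) ↔ Summable fun u ↦ f (φ u) := by
  have fiber_const : ∀ b (u : {u // φ u = b}), f (φ u) = f b := fun b u ↦ by rw [u.2]
  rw [← (Equiv.sigmaFiberEquiv φ).summable_iff, summable_sigma_of_nonneg fun _ ↦ by exact hf _]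
  simp only [Function.comp_apply, Equiv.sigmaFiberEquiv_apply, fiber_const, tsum_const,
    nsmul_eq_mul, Summable.of_finite, implies_true, true_and]

/-- Root-preserving isomorphism of rooted trees of arbitrary sizes. -/
def sizedTreeSetoid : Setoid SizedRTree where
  r t t' := RootedIso t.2.adj t.2.root t'.2.adj t'.2.root
  iseqv := ⟨fun _ ↦ .refl _ _, .symm, .trans⟩

/-- Unlabelled rooted trees: rooted trees of all sizes up to isomorphism. -/
def TreeIsoClass : Type := Quotient sizedTreeSetoid

namespace TreeIsoClass

/-- The isomorphism class of a rooted tree. -/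
def mk (t : SizedRTree) : TreeIsoClass := Quotient.mk sizedTreeSetoid t

lemma mk_eq_mk_iff {t t' : SizedRTree} :
    mk t = mk t' ↔ RootedIso t.2.adj t.2.root t'.2.adj t'.2.root :=
  Quotient.eq (r := sizedTreeSetoid)

lemma mk_surjective : Function.Surjective mk := Quotient.mk_surjective

/-- The number of vertices. -/
def size : TreeIsoClass → ℕ :=
  Quotient.lift Sigma.fst fun _ _ ⟨e, _⟩ ↦ by simpa using Fintype.card_congr e.toEquiv

/-- The number of leaves. -/
noncomputable def leaves : TreeIsoClass → ℕ :=
  Quotient.lift (fun t ↦ numLeaves t.2) fun _ _ h ↦ by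
    simpa only [numLeaves_eq_card_isLeafAt] using h.card_isLeafAt_eq

@[simp] lemma size_mk (t : SizedRTree) : size (mk t) = t.1 := rfl

@[simp] lemma leaves_mk (t : SizedRTree) : leaves (mk t) = numLeaves t.2 := rfl

lemma mk_graftTree_eq_iff [Fintype ι] [Fintype ι'] {t : ι → SizedRTree} {t' : ι' → SizedRTree} :
    mk (graftTree t) = mk (graftTree t') ↔
      Finset.univ.val.map (fun i ↦ mk (t i)) = Finset.univ.val.map fun i ↦ mk (t' i) := by
  simp only [map_univ_val_eq_iff_exists_equiv, mk_eq_mk_iff]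
  constructor
  · intro h
    exact exists_equiv_of_rootedIso_graftGraph (fun i ↦ (t i).2.connected)
      ((rootedIso_graftTree t).symm.trans (h.trans (rootedIso_graftTree t')))
  · rintro ⟨σ, hσ⟩
    exact (rootedIso_graftTree t).trans
      ((rootedIso_graftGraph σ hσ).trans (rootedIso_graftTree t').symm)

lemma exists_mk_graftTree_eq (u : TreeIsoClass) :
    ∃ (ι : Type) (_ : Fintype ι) (t : ι → SizedRTree), mk (graftTree t) = u := by
  obtain ⟨⟨n, t⟩, rfl⟩ := mk_surjective u
  have := Fintype.ofFinite (rootComplement t.adj t.root).ConnectedComponent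
  have exists_root : ∀ c : (rootComplement t.adj t.root).ConnectedComponent,
      ∃ v : c, t.adj.Adj t.root v.1 := by
    refine ConnectedComponent.ind fun v ↦ ?_
    obtain ⟨w, hw, hwv⟩ := exists_adj_reachable_rootComplement t.connected v
    exact ⟨⟨w, ConnectedComponent.sound hwv⟩, hw⟩
  choose s hs using exists_root
  choose b hb using fun c ↦ exists_rTree_rootedIso
    ((t.acyclic.induce _).isTree_connectedComponent c) (s c)
  refine ⟨_, this, fun c ↦ ⟨_, b c⟩, mk_eq_mk_iff.2 ((rootedIso_graftTree _).trans ?_)⟩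
  exact (rootedIso_graftGraph (.refl _) hb).trans
    (rootedIso_graftGraph_rootComplement t.acyclic s hs)

open Classical in
/-- The rooted tree whose branches are given by a multiset of rooted trees. -/
noncomputable def graft (m : Multiset TreeIsoClass) : TreeIsoClass :=
  mk (graftTree fun i : m ↦ i.1.out)

lemma graft_map_univ [Fintype ι] (t : ι → SizedRTree) :
    graft (Finset.univ.val.map fun i ↦ mk (t i)) = mk (graftTree t) := by
  classical
  refine mk_graftTree_eq_iff.2 ?_
  have mk_out : ∀ u : TreeIsoClass, mk u.out = u := Quotient.out_eq
  simp only [mk_out, Multiset.map_univ_coe]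

lemma exists_map_univ_eq (m : Multiset TreeIsoClass) :
    ∃ (ι : Type) (_ : Fintype ι) (t : ι → SizedRTree),
      Finset.univ.val.map (fun i ↦ mk (t i)) = m := by
  classical
  refine ⟨m, inferInstance, fun i ↦ i.1.out, ?_⟩
  have mk_out : ∀ u : TreeIsoClass, mk u.out = u := Quotient.out_eq
  simp only [mk_out, Multiset.map_univ_coe]

lemma graft_bijective : Function.Bijective graft := by
  constructor
  · intro m m' h
    obtain ⟨ι, _, t, rfl⟩ := exists_map_univ_eq m
    obtain ⟨ι', _, t', rfl⟩ := exists_map_univ_eq m'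
    rw [graft_map_univ, graft_map_univ] at h
    exact mk_graftTree_eq_iff.1 h
  · intro u
    obtain ⟨ι, _, t, rfl⟩ := exists_mk_graftTree_eq u
    exact ⟨_, graft_map_univ t⟩

lemma size_graft (m : Multiset TreeIsoClass) : size (graft m) = 1 + (m.map size).sum := by
  obtain ⟨ι, _, t, rfl⟩ := exists_map_univ_eq m
  rw [graft_map_univ, size_mk, Multiset.map_map]
  change Nat.card (Option (Σ i, Fin (t i).1)) = 1 + ∑ i, (t i).1
  rw [Finite.card_option, Nat.card_sigma, add_comm]
  simp only [Nat.card_eq_fintype_card, Fintype.card_fin]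

lemma leaves_graft_zero : leaves (graft 0) = 1 := by
  have h := graft_map_univ (fun i : Empty ↦ (i.elim : SizedRTree))
  rw [Finset.univ_eq_empty, Finset.empty_val, Multiset.map_zero] at h
  rw [h, leaves_mk, numLeaves_eq_card_isLeafAt, (rootedIso_graftTree _).card_isLeafAt_eq,
    card_isLeafAt_graftGraph_of_isEmpty]

lemma leaves_graft {m : Multiset TreeIsoClass} (hm : m ≠ 0) :
    leaves (graft m) = (m.map leaves).sum := by
  obtain ⟨ι, _, t, rfl⟩ := exists_map_univ_eq m
  have : Nonempty ι := by
    contrapose! hm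
    rw [Finset.univ_eq_empty, Finset.empty_val, Multiset.map_zero]
  rw [graft_map_univ, leaves_mk, numLeaves_eq_card_isLeafAt,
    (rootedIso_graftTree _).card_isLeafAt_eq,
    card_isLeafAt_graftGraph fun i ↦ (t i).2.connected, Multiset.map_map]
  exact Finset.sum_congr rfl fun i _ ↦ (numLeaves_eq_card_isLeafAt _).symm

/-- The classes counted by `aCount n k`, as classes of trees with `n` vertices and `k` leaves. -/
noncomputable def equivFiber (n k : ℕ) :
    Quotient (Setoid.comap (Subtype.val : {t : RTree n // numLeaves t = k} → RTree n)
      (treeSetoid n)) ≃ {u : TreeIsoClass // (u.size, u.leaves) = (n, k)} := by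
  let F (t : {t : RTree n // numLeaves t = k}) :
      {u : TreeIsoClass // (u.size, u.leaves) = (n, k)} :=
    ⟨mk ⟨n, t.1⟩, Prod.ext rfl t.2⟩
  refine .ofBijective
    (Quotient.lift F fun t t' h ↦ Subtype.ext (mk_eq_mk_iff.2 h)) ⟨?_, ?_⟩
  · refine Quotient.ind₂ fun t t' h ↦ Quotient.sound ?_
    exact mk_eq_mk_iff.1 (congrArg Subtype.val h)
  · rintro ⟨u, hu⟩
    obtain ⟨⟨n', t⟩, rfl⟩ := mk_surjective u
    obtain ⟨rfl, ht⟩ := Prod.ext_iff.1 hu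
    exact ⟨Quotient.mk _ ⟨t, ht⟩, rfl⟩

lemma aCount_eq_card_fiber (p : ℕ × ℕ) :
    aCount p.1 p.2 = Nat.card {u : TreeIsoClass // (u.size, u.leaves) = p} :=
  Nat.card_congr (equivFiber p.1 p.2)

instance (p : ℕ × ℕ) : Finite {u : TreeIsoClass // (u.size, u.leaves) = p} :=
  .of_equiv _ (equivFiber p.1 p.2)

lemma summable_aCount_iff {x z : ℝ} (hx : 0 ≤ x) (hz : 0 ≤ z) :
    Summable (fun p : ℕ × ℕ ↦ (aCount p.1 p.2 : ℝ) * x ^ p.1 * z ^ p.2) ↔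
      Summable fun u : TreeIsoClass ↦ x ^ u.size * z ^ u.leaves := by
  simp only [aCount_eq_card_fiber, mul_assoc]
  exact summable_card_fiber_mul_iff (f := fun p : ℕ × ℕ ↦ x ^ p.1 * z ^ p.2)
    fun p ↦ by positivity

end TreeIsoClass

end IsoClasses

section MultisetProducts

variable {U : Type*} {w : U → ℝ}

/-- The multisets with all elements in `s`. -/
def multisetsIn (s : Finset U) : Set (Multiset U) := {m | ∀ u ∈ m, u ∈ s}

lemma multisetsIn_empty : multisetsIn (∅ : Finset U) = {0} := by
  ext m
  simp [multisetsIn, Multiset.eq_zero_iff_forall_notMem]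

/-- Splits a multiset in `insert a s` into the copies of `a` and the rest. -/
def multisetsInInsertEquiv [DecidableEq U] {a : U} {s : Finset U} (ha : a ∉ s) :
    ℕ × multisetsIn s ≃ multisetsIn (insert a s) where
  toFun p := ⟨Multiset.replicate p.1 a + p.2.1, fun u hu ↦ by
    rw [Multiset.mem_add] at hu
    rcases hu with hu | hu
    · exact Multiset.eq_of_mem_replicate hu ▸ Finset.mem_insert_self a s
    · exact Finset.mem_insert_of_mem (p.2.2 u hu)⟩
  invFun m := (m.1.count a, ⟨m.1.filter (· ≠ a), fun u hu ↦ by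
    rw [Multiset.mem_filter] at hu
    exact (Finset.mem_insert.1 (m.2 u hu.1)).resolve_left hu.2⟩)
  left_inv := by
    rintro ⟨k, m, hm⟩
    have ha_notMem : a ∉ m := fun h ↦ ha (hm a h)
    have m_filter : m.filter (· ≠ a) = m :=
      Multiset.filter_eq_self.2 fun u hu h ↦ ha_notMem (h ▸ hu)
    have replicate_filter : (Multiset.replicate k a).filter (· ≠ a) = 0 :=
      Multiset.filter_eq_nil.2 fun u hu ↦ not_not.2 (Multiset.eq_of_mem_replicate hu)
    ext1
    · simp [Multiset.count_eq_zero.2 ha_notMem]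
    · refine Subtype.ext ?_
      change (Multiset.replicate k a + m).filter (· ≠ a) = m
      rw [Multiset.filter_add, m_filter, replicate_filter, zero_add]
  right_inv := by
    rintro ⟨m, hm⟩
    refine Subtype.ext ?_
    change Multiset.replicate (m.count a) a + m.filter (· ≠ a) = m
    rw [← Multiset.filter_eq' m a]
    exact Multiset.filter_add_not _ m

lemma prod_map_nonneg (hw : ∀ u, 0 ≤ w u) (m : Multiset U) : 0 ≤ (m.map w).prod :=
  Multiset.prod_nonneg fun _ hx ↦ by
    obtain ⟨u, -, rfl⟩ := Multiset.mem_map.1 hx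
    exact hw u

lemma hasSum_prod_map_multisetsIn (hw0 : ∀ u, 0 ≤ w u) (hw1 : ∀ u, w u < 1) (s : Finset U) :
    HasSum (fun m : multisetsIn s ↦ (m.1.map w).prod) (∏ u ∈ s, (1 - w u)⁻¹) := by
  classical
  induction s using Finset.induction_on with
  | empty =>
    rw [multisetsIn_empty]
    simpa only [Set.default_coe_singleton, Multiset.map_zero, Multiset.prod_zero,
      Finset.prod_empty] using hasSum_unique fun m : ({0} : Set (Multiset U)) ↦ (m.1.map w).prod
  | insert a s ha ih =>
    have geometric := hasSum_geometric_of_lt_one (hw0 a) (hw1 a)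
    have hprod := geometric.mul ih (geometric.summable.mul_of_nonneg ih.summable
      (fun k ↦ pow_nonneg (hw0 a) k) fun m ↦ prod_map_nonneg hw0 m.1)
    rw [Finset.prod_insert ha, ← (multisetsInInsertEquiv ha).hasSum_iff]
    simpa [Function.comp_def, multisetsInInsertEquiv] using hprod

/-- The Taylor remainder `∑_{k ≥ 2} x ^ k / k` of `-log (1 - x)`. -/
noncomputable def logTail (x : ℝ) : ℝ := -Real.log (1 - x) - x

lemma logTail_nonneg {x : ℝ} (hx : x < 1) : 0 ≤ logTail x := by
  have := Real.log_le_sub_one_of_pos (sub_pos.2 hx)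
  rw [logTail]
  linarith

lemma logTail_le_self {x : ℝ} (h0 : 0 ≤ x) (hx : x ≤ 1 / 2) : logTail x ≤ x := by
  have hlog := Real.log_le_sub_one_of_pos (inv_pos.2 (show 0 < 1 - x by linarith))
  have hinv : (1 - x)⁻¹ ≤ 1 + 2 * x := by
    rw [inv_le_iff_one_le_mul₀ (by linarith)]
    nlinarith
  rw [Real.log_inv] at hlog
  rw [logTail]
  linarith

lemma hasDerivAt_logTail {x : ℝ} (hx : x < 1) : HasDerivAt logTail (x / (1 - x)) x := by
  have hlog := (((hasDerivAt_id x).const_sub 1).log (sub_pos.2 hx).ne').neg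
  refine (hlog.sub (hasDerivAt_id x)).congr_deriv ?_
  have : 1 - x ≠ 0 := (sub_pos.2 hx).ne'
  simp only [id]
  field_simp
  ring

lemma summable_logTail (hw : Summable w) : Summable fun u ↦ logTail (w u) := by
  have := (Real.summable_log_one_add_of_summable hw.neg).neg.sub hw
  simpa only [logTail, sub_eq_add_neg] using this

lemma prod_one_sub_inv_eq_exp (hw : ∀ u, w u < 1) (s : Finset U) :
    ∏ u ∈ s, (1 - w u)⁻¹ = Real.exp (∑ u ∈ s, w u + ∑ u ∈ s, logTail (w u)) := by
  rw [← Finset.sum_add_distrib, Real.exp_sum]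
  refine Finset.prod_congr rfl fun u _ ↦ ?_
  rw [logTail, add_sub_cancel, Real.exp_neg, Real.exp_log (sub_pos.2 (hw u))]

lemma sum_prod_map_le (hw0 : ∀ u, 0 ≤ w u) (hw1 : ∀ u, w u < 1) {s : Finset U}
    {F : Finset (Multiset U)} (hF : ∀ m ∈ F, m ∈ multisetsIn s) :
    ∑ m ∈ F, (m.map w).prod ≤ Real.exp (∑ u ∈ s, w u + ∑ u ∈ s, logTail (w u)) := by
  classical
  rw [← prod_one_sub_inv_eq_exp hw1, ← Finset.sum_subtype_of_mem (fun m ↦ (m.map w).prod) hF]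
  exact sum_le_hasSum _ (fun m _ ↦ prod_map_nonneg hw0 m.1) (hasSum_prod_map_multisetsIn hw0 hw1 s)

theorem hasSum_prod_map_multiset (hw0 : ∀ u, 0 ≤ w u) (hw1 : ∀ u, w u < 1) (hw : Summable w) :
    HasSum (fun m : Multiset U ↦ (m.map w).prod)
      (Real.exp (∑' u, w u + ∑' u, logTail (w u))) := by
  classical
  refine hasSum_of_isLUB_of_nonneg _ (prod_map_nonneg hw0) ⟨?_, fun B hB ↦ ?_⟩
  · rintro _ ⟨F, rfl⟩
    have hF : ∀ m ∈ F, m ∈ multisetsIn (F.biUnion Multiset.toFinset) := fun m hm u hu ↦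
      Finset.mem_biUnion.2 ⟨m, hm, Multiset.mem_toFinset.2 hu⟩
    refine (sum_prod_map_le hw0 hw1 hF).trans (Real.exp_le_exp.2 (add_le_add ?_ ?_))
    · exact hw.sum_le_tsum _ fun u _ ↦ hw0 u
    · exact (summable_logTail hw).sum_le_tsum _ fun u _ ↦ logTail_nonneg (hw1 u)
  · have hlim := (Real.continuous_exp.tendsto _).comp (hw.hasSum.add (summable_logTail hw).hasSum)
    refine le_of_tendsto' hlim fun s ↦ ?_
    rw [Function.comp_apply, Finset.sum_add_distrib, ← prod_one_sub_inv_eq_exp hw1]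
    refine hasSum_le_of_sum_le (hasSum_prod_map_multisetsIn hw0 hw1 s) fun F ↦ ?_
    exact (Finset.sum_map F (.subtype _) fun m ↦ (m.map w).prod).ge.trans (hB ⟨_, rfl⟩)

end MultisetProducts

section Calculus

open Filter Topology Asymptotics

/-- Unlike in the implicit function theorem, the solution `g` is given and known to be continuous,
so that mere differentiability of `f` at one point suffices. -/
lemma hasFDerivAt_of_implicit {𝕜 E : Type*} [NontriviallyNormedField 𝕜] [NormedAddCommGroup E]
    [NormedSpace 𝕜 E] {f : E × 𝕜 → 𝕜} {L : E × 𝕜 →L[𝕜] 𝕜} {g : E → 𝕜} {x : E}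
    (hf : HasFDerivAt f L (x, g x)) (hL : L (0, 1) ≠ 0) (hg : ContinuousAt g x)
    (hfg : ∀ᶠ y in 𝓝 x, f (y, g y) = f (x, g x)) :
    HasFDerivAt g (-(L (0, 1))⁻¹ • L.comp (.inl 𝕜 E 𝕜)) x := by
  have L_apply : ∀ h k, L (h, k) = L (h, 0) + L (0, 1) * k := by
    intro h k
    rw [mul_comm, ← smul_eq_mul, ← map_smul, ← map_add, Prod.smul_mk, Prod.mk_add_mk, smul_zero,
      add_zero, zero_add, smul_eq_mul, mul_one]
  let M : E →L[𝕜] 𝕜 := -(L (0, 1))⁻¹ • L.comp (.inl 𝕜 E 𝕜)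
  let R : E → 𝕜 := fun y ↦ g y - g x - M (y - x)
  have L_eq : ∀ y, L (y - x, g y - g x) = L (0, 1) * R y := by
    intro y
    have M_apply : M (y - x) = -(L (0, 1))⁻¹ * L (y - x, 0) := rfl
    rw [L_apply]
    simp only [R, M_apply]
    linear_combination -L (y - x, 0) * mul_inv_cancel₀ hL
  have R_littleO : R =o[𝓝 x] fun y ↦ ((y - x, g y - g x) : E × 𝕜) := by
    have hcurve : Tendsto (fun y ↦ (y, g y)) (𝓝 x) (𝓝 (x, g x)) := continuousAt_id.prodMk hg
    have h := hf.isLittleO.comp_tendsto hcurve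
    refine (isLittleO_const_mul_left_iff hL).1 (h.neg_left.congr' ?_ .rfl)
    filter_upwards [hfg] with y hy
    simp only [Function.comp_apply, hy, Prod.mk_sub_mk, L_eq, sub_self, zero_sub, neg_neg]
  have increment_bigO : (fun y ↦ ((y - x, g y - g x) : E × 𝕜)) =O[𝓝 x]
      fun y ↦ ‖y - x‖ + ‖R y‖ := by
    have left_bigO : (fun y ↦ y - x) =O[𝓝 x] fun y ↦ ‖y - x‖ + ‖R y‖ :=
      .of_norm_le fun y ↦ le_add_of_nonneg_right (norm_nonneg _)
    have R_bigO : R =O[𝓝 x] fun y ↦ ‖y - x‖ + ‖R y‖ :=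
      .of_norm_le fun y ↦ le_add_of_nonneg_left (norm_nonneg _)
    refine left_bigO.prod_left ((R_bigO.add ((M.isBigO_comp _ _).trans left_bigO)).congr_left ?_)
    exact fun y ↦ sub_add_cancel _ _
  have R_littleO_sum := R_littleO.trans_isBigO increment_bigO
  have sum_bigO := R_littleO_sum.norm_left.right_isBigO_sub
  simp only [add_sub_cancel_right] at sum_bigO
  exact hasFDerivAt_iff_isLittleO.2 (R_littleO_sum.trans_isBigO sum_bigO.of_norm_right)

end Calculus

namespace TreeIsoClass

/-- A rooted tree is a root together with an arbitrary multiset of branches. -/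
noncomputable def graftEquiv : Multiset TreeIsoClass ≃ TreeIsoClass :=
  Equiv.ofBijective graft graft_bijective

lemma graft_graftEquiv_symm (u : TreeIsoClass) : graft (graftEquiv.symm u) = u :=
  graftEquiv.apply_symm_apply u

lemma size_lt_size_graft {m : Multiset TreeIsoClass} {u : TreeIsoClass} (hu : u ∈ m) :
    u.size < (graft m).size := by
  rw [size_graft, Nat.one_add, Nat.lt_succ_iff]
  exact Multiset.le_sum_of_mem (Multiset.mem_map_of_mem size hu)

lemma one_le_size (u : TreeIsoClass) : 1 ≤ u.size := by
  obtain ⟨m, rfl⟩ := graft_bijective.2 u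
  exact size_graft m ▸ Nat.le_add_right 1 _

lemma leaves_le_size (u : TreeIsoClass) : u.leaves ≤ u.size := by
  induction hn : u.size using Nat.strong_induction_on generalizing u with
  | h n ih =>
    obtain ⟨m, rfl⟩ := graft_bijective.2 u
    subst hn
    rcases eq_or_ne m 0 with rfl | hm
    · exact leaves_graft_zero ▸ one_le_size _
    · rw [leaves_graft hm, size_graft]
      exact (Multiset.sum_map_le_sum_map _ _ fun u hu ↦ ih _ (size_lt_size_graft hu) u rfl).trans
        (Nat.le_add_left _ _)

/-- The linear form `(log z, log x) ↦ log (x ^ size * z ^ leaves)`. -/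
noncomputable def exponent (u : TreeIsoClass) : ℝ × ℝ →L[ℝ] ℝ :=
  (u.leaves : ℝ) • .fst ℝ ℝ ℝ + (u.size : ℝ) • .snd ℝ ℝ ℝ

lemma exponent_apply (u : TreeIsoClass) (p : ℝ × ℝ) :
    u.exponent p = u.leaves * p.1 + u.size * p.2 := rfl

/-- The term `x ^ size * z ^ leaves` of the generating function, in the coordinates
`p = (log z, log x)`. -/
noncomputable def weight (p : ℝ × ℝ) (u : TreeIsoClass) : ℝ := Real.exp (u.exponent p)

lemma weight_pos (p : ℝ × ℝ) (u : TreeIsoClass) : 0 < weight p u := Real.exp_pos _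

lemma weight_nonneg (p : ℝ × ℝ) (u : TreeIsoClass) : 0 ≤ weight p u := (weight_pos p u).le

/-- The amount `x * z - x` by which the one-vertex tree, whose root counts as a leaf, deviates from
the weight `x` of a root that is not a leaf. -/
noncomputable def leafCorrection (p : ℝ × ℝ) : ℝ := Real.exp (p.1 + p.2) - Real.exp p.2

lemma neg_one_lt_leafCorrection {p : ℝ × ℝ} (h : p.2 < 0) : -1 < leafCorrection p := by
  rw [leafCorrection]
  linarith [Real.exp_pos (p.1 + p.2), Real.exp_lt_one_iff.2 h]

lemma prod_map_weight (p : ℝ × ℝ) (m : Multiset TreeIsoClass) : (m.map (weight p)).prod =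
    Real.exp ((m.map leaves).sum * p.1 + (m.map size).sum * p.2) := by
  induction m using Multiset.induction_on with
  | empty => simp
  | cons u m ih =>
    simp only [Multiset.map_cons, Multiset.prod_cons, Multiset.sum_cons, ih, weight,
      exponent_apply, ← Real.exp_add, Nat.cast_add]
    ring_nf

lemma weight_graft_zero (p : ℝ × ℝ) : weight p (graft 0) = Real.exp (p.1 + p.2) := by
  simp [weight, exponent_apply, leaves_graft_zero, size_graft]

open Classical in
lemma weight_graft (p : ℝ × ℝ) (m : Multiset TreeIsoClass) : weight p (graft m) =
    Real.exp p.2 * (m.map (weight p)).prod + if m = 0 then leafCorrection p else 0 := by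
  split_ifs with hm
  · simp [hm, weight_graft_zero, leafCorrection]
  · rw [prod_map_weight, weight, exponent_apply, leaves_graft hm, size_graft, ← Real.exp_add,
      Nat.cast_add, Nat.cast_one]
    ring_nf

section Domain

variable {p : ℝ × ℝ}

lemma not_summable_weight_of_le {t : ℕ → TreeIsoClass} (ht : t.Injective) {c : ℝ} (hc : 0 < c)
    (h : ∀ k, c ≤ weight p (t k)) : ¬ Summable (weight p) := fun hp ↦
  hc.not_ge (ge_of_tendsto' (hp.comp_injective ht).tendsto_atTop_zero h)

/-- The path with `k + 1` vertices, rooted at an end. -/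
noncomputable def path : ℕ → TreeIsoClass
  | 0 => graft 0
  | k + 1 => graft {path k}

lemma size_path (k : ℕ) : (path k).size = k + 1 := by
  induction k with
  | zero => simp [path, size_graft]
  | succ k ih => simp [path, size_graft, ih, add_comm]

lemma leaves_path (k : ℕ) : (path k).leaves = 1 := by
  induction k with
  | zero => exact leaves_graft_zero
  | succ k ih => simp [path, leaves_graft, ih]

/-- The star with `k + 1` edges, rooted at its centre. -/
noncomputable def star (k : ℕ) : TreeIsoClass := graft (Multiset.replicate (k + 1) (graft 0))

lemma size_star (k : ℕ) : (star k).size = k + 2 := by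
  simp only [star, size_graft, Multiset.map_replicate, Multiset.sum_replicate, Multiset.map_zero,
    Multiset.sum_zero, smul_eq_mul]
  ring

lemma leaves_star (k : ℕ) : (star k).leaves = k + 1 := by
  have : Multiset.replicate (k + 1) (graft 0) ≠ 0 := by simp [Multiset.replicate_succ]
  simp only [star, leaves_graft this, Multiset.map_replicate, Multiset.sum_replicate,
    leaves_graft_zero, smul_eq_mul, mul_one]

lemma snd_neg_of_summable_weight (h : Summable (weight p)) : p.2 < 0 := by
  by_contra! hp
  have path_injective : path.Injective := fun i j hij ↦ by
    simpa [size_path] using congrArg size hij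
  refine not_summable_weight_of_le path_injective (Real.exp_pos p.1) (fun k ↦ ?_) h
  rw [weight, exponent_apply, size_path, leaves_path, Nat.cast_one, one_mul, Real.exp_le_exp]
  exact le_add_of_nonneg_right (by positivity)

lemma fst_add_snd_neg_of_summable_weight (h : Summable (weight p)) : p.1 + p.2 < 0 := by
  by_contra! hp
  have star_injective : star.Injective := fun i j hij ↦ by
    simpa [size_star] using congrArg size hij
  refine not_summable_weight_of_le star_injective (Real.exp_pos p.2) (fun k ↦ ?_) h
  rw [weight, exponent_apply, size_star, leaves_star, Real.exp_le_exp]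
  push_cast
  linarith [mul_nonneg (k.cast_add_one_pos (α := ℝ)).le hp]

lemma exponent_le {μ : ℝ} (h2 : p.2 ≤ μ) (h12 : p.1 + p.2 ≤ μ) (u : TreeIsoClass) :
    u.exponent p ≤ u.size * μ := by
  have hle : (u.leaves : ℝ) ≤ u.size := by exact_mod_cast u.leaves_le_size
  calc u.exponent p = u.leaves * (p.1 + p.2) + (u.size - u.leaves) * p.2 := by
        rw [exponent_apply]; ring
    _ ≤ u.leaves * μ + (u.size - u.leaves) * μ := by gcongr
    _ = u.size * μ := by ring

lemma weight_le {μ : ℝ} (h2 : p.2 ≤ μ) (h12 : p.1 + p.2 ≤ μ) (hμ : μ ≤ 0) (u : TreeIsoClass) :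
    weight p u ≤ Real.exp μ := by
  have : (1 : ℝ) ≤ u.size := by exact_mod_cast u.one_le_size
  exact Real.exp_le_exp.2 ((exponent_le h2 h12 u).trans (by nlinarith))

lemma weight_lt_one (h2 : p.2 < 0) (h12 : p.1 + p.2 < 0) (u : TreeIsoClass) : weight p u < 1 :=
  (weight_le (le_max_left _ _) (le_max_right _ _) (max_lt h2 h12).le u).trans_lt
    (Real.exp_lt_one_iff.2 (max_lt h2 h12))

lemma weight_lt_one_of_summable (h : Summable (weight p)) (u : TreeIsoClass) : weight p u < 1 :=
  weight_lt_one (snd_neg_of_summable_weight h) (fst_add_snd_neg_of_summable_weight h) u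

end Domain

section FunctionalEquation

variable {p : ℝ × ℝ}

/-- The generating function `T(x, z)` in the coordinates `p = (log z, log x)`. -/
noncomputable def treeSum (p : ℝ × ℝ) : ℝ := ∑' u, weight p u

/-- The part `∑_{i ≥ 2} T(x ^ i, z ^ i) / i` of Pólya's exponent `∑_{i ≥ 1} T(x ^ i, z ^ i) / i`. -/
noncomputable def logTailSum (p : ℝ × ℝ) : ℝ := ∑' u, logTail (weight p u)

lemma logTailSum_nonneg (h : Summable (weight p)) : 0 ≤ logTailSum p :=
  tsum_nonneg fun u ↦ logTail_nonneg (weight_lt_one_of_summable h u)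

theorem treeSum_sub_leafCorrection (h : Summable (weight p)) :
    treeSum p - leafCorrection p = Real.exp (p.2 + (treeSum p + logTailSum p)) := by
  classical
  have hprod := hasSum_prod_map_multiset (weight_nonneg p) (weight_lt_one_of_summable h) h
  have hgraft : HasSum (weight p ∘ graftEquiv) (Real.exp (p.2 + (treeSum p + logTailSum p)) +
      leafCorrection p) := by
    rw [Real.exp_add p.2]
    exact ((hprod.mul_left _).add (hasSum_ite_eq 0 (leafCorrection p))).congr_fun (weight_graft p)
  exact sub_eq_iff_eq_add.2 (graftEquiv.hasSum_iff.1 hgraft).tsum_eq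

lemma sum_weight_graft_le (h2 : p.2 < 0) (h12 : p.1 + p.2 < 0) {F : Finset (Multiset TreeIsoClass)}
    {s : Finset TreeIsoClass} (h0 : 0 ∈ F) (hF : ∀ m ∈ F, m ∈ multisetsIn s) :
    ∑ m ∈ F, weight p (graft m) ≤
      Real.exp (p.2 + (∑ u ∈ s, weight p u + ∑ u ∈ s, logTail (weight p u))) +
        leafCorrection p := by
  classical
  have hprod := sum_prod_map_le (weight_nonneg p) (weight_lt_one h2 h12) hF
  simp only [weight_graft, Finset.sum_add_distrib, ← Finset.mul_sum, Finset.sum_ite_eq', h0,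
    if_true, Real.exp_add p.2]
  gcongr

/-- The functional equation propagates the bound `C` from trees with fewer than `n` vertices to
trees with at most `n` vertices. -/
lemma summable_weight_of_sum_le {B C : ℝ} (h2 : p.2 < 0) (h12 : p.1 + p.2 < 0) (hC : 0 ≤ C)
    (hB : ∀ s, ∑ u ∈ s, weight p u ≤ C → ∑ u ∈ s, weight p u + ∑ u ∈ s, logTail (weight p u) ≤ B)
    (hBC : Real.exp (p.2 + B) + leafCorrection p ≤ C) : Summable (weight p) := by
  classical
  have sum_le : ∀ n, ∀ s : Finset TreeIsoClass, (∀ u ∈ s, u.size ≤ n) →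
      ∑ u ∈ s, weight p u ≤ C := by
    intro n
    induction n with
    | zero =>
      intro s hs
      have : s = ∅ := Finset.eq_empty_of_forall_notMem fun u hu ↦
        absurd (hs u hu) (Nat.not_le.2 u.one_le_size)
      simpa [this] using hC
    | succ n ih =>
      intro s hs
      let F := insert 0 (s.map graftEquiv.symm.toEmbedding)
      let branches := F.biUnion Multiset.toFinset
      have hF : ∀ m ∈ F, m ∈ multisetsIn branches := fun m hm u hu ↦
        Finset.mem_biUnion.2 ⟨m, hm, Multiset.mem_toFinset.2 hu⟩
      have size_branches : ∀ u ∈ branches, u.size ≤ n := by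
        simp only [branches, F, Finset.mem_biUnion, Finset.mem_insert, Finset.mem_map,
          Multiset.mem_toFinset]
        rintro u ⟨_, rfl | ⟨v, hv, rfl⟩, hu⟩
        · exact absurd hu (Multiset.notMem_zero u)
        · exact Nat.le_of_lt_succ ((size_lt_size_graft hu).trans_le
            ((graft_graftEquiv_symm v).symm ▸ hs v hv))
      calc ∑ u ∈ s, weight p u
          = ∑ m ∈ s.map graftEquiv.symm.toEmbedding, weight p (graft m) := by
            simp [graft_graftEquiv_symm]
        _ ≤ ∑ m ∈ F, weight p (graft m) := Finset.sum_le_sum_of_subset_of_nonneg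
            (Finset.subset_insert _ _) fun m _ _ ↦ weight_nonneg p _
        _ ≤ _ := sum_weight_graft_le h2 h12 (Finset.mem_insert_self _ _) hF
        _ ≤ Real.exp (p.2 + B) + leafCorrection p := by gcongr; exact hB _ (ih _ size_branches)
        _ ≤ C := hBC
  exact summable_of_sum_le (weight_nonneg p) fun s ↦ sum_le _ s fun u ↦ Finset.le_sup (f := size)

/-- With `y = T - x (z - 1)`, the functional equation reads `log y - (y - 1) = excess p`; since
`log y ≤ y - 1`, it is solvable only if `excess p ≤ 0`, with `y = 1` in the case of equality. -/
noncomputable def excess (p : ℝ × ℝ) : ℝ := p.2 + 1 + leafCorrection p + logTailSum p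

lemma treeSum_sub_leafCorrection_pos (h : Summable (weight p)) :
    0 < treeSum p - leafCorrection p :=
  treeSum_sub_leafCorrection h ▸ Real.exp_pos _

lemma log_treeSum_sub_leafCorrection (h : Summable (weight p)) :
    Real.log (treeSum p - leafCorrection p) = excess p + (treeSum p - leafCorrection p - 1) := by
  conv_lhs => rw [treeSum_sub_leafCorrection h, Real.log_exp]
  rw [excess]
  ring

lemma excess_nonpos (h : Summable (weight p)) : excess p ≤ 0 := by
  have := Real.log_le_sub_one_of_pos (treeSum_sub_leafCorrection_pos h)
  rw [log_treeSum_sub_leafCorrection h] at this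
  linarith

lemma treeSum_of_excess_eq_zero (h : Summable (weight p)) (h0 : excess p = 0) :
    treeSum p = 1 + leafCorrection p := by
  by_contra hne
  have := Real.log_lt_sub_one_of_pos (treeSum_sub_leafCorrection_pos h)
    (mt sub_eq_iff_eq_add.1 hne)
  rw [log_treeSum_sub_leafCorrection h, h0] at this
  linarith

lemma treeSum_le (h : Summable (weight p)) : treeSum p ≤ 1 - 2 * p.2 := by
  have hy := treeSum_sub_leafCorrection_pos h
  have log_half := Real.log_le_sub_one_of_pos (half_pos hy)
  rw [Real.log_div hy.ne' two_ne_zero, log_treeSum_sub_leafCorrection h, excess] at log_half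
  have log_two := Real.log_le_sub_one_of_pos two_pos
  have hc := neg_one_lt_leafCorrection (snd_neg_of_summable_weight h)
  have := logTailSum_nonneg h
  linarith

lemma summable_weight_of_excess_nonpos (h2 : p.2 < 0) (h12 : p.1 + p.2 < 0)
    (hH : Summable fun u ↦ logTail (weight p u)) (h : excess p ≤ 0) : Summable (weight p) := by
  refine summable_weight_of_sum_le (C := 1 + leafCorrection p)
    (B := 1 + leafCorrection p + logTailSum p) h2 h12 ?_ (fun s hs ↦ ?_) ?_
  · linarith [neg_one_lt_leafCorrection h2]
  · exact add_le_add hs (hH.sum_le_tsum s fun u _ ↦ logTail_nonneg (weight_lt_one h2 h12 u))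
  · have : p.2 + (1 + leafCorrection p + logTailSum p) = excess p := by rw [excess]; ring
    rw [this]
    gcongr
    exact Real.exp_le_one_iff.2 h

lemma summable_weight_neg_abs_sub (b : ℝ) : Summable (weight (b, -|b| - 5)) := by
  have hb := le_abs_self b
  have hb0 := abs_nonneg b
  have exp_le_half : ∀ {t : ℝ}, t ≤ -1 → Real.exp t ≤ 1 / 2 := by
    intro t ht
    refine (Real.exp_le_exp.2 ht).trans ?_
    rw [Real.exp_neg, one_div]
    exact inv_anti₀ two_pos (by linarith [Real.add_one_le_exp 1])
  have weight_le_half : ∀ u, weight (b, -|b| - 5) u ≤ 1 / 2 := fun u ↦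
    (weight_le (μ := -1) (by linarith) (by linarith) (by norm_num) u).trans (exp_le_half le_rfl)
  refine summable_weight_of_sum_le (C := 1) (B := 2) (by linarith) (by linarith) zero_le_one
    (fun s hs ↦ ?_) ?_
  · have : ∑ u ∈ s, logTail (weight (b, -|b| - 5) u) ≤ ∑ u ∈ s, weight (b, -|b| - 5) u :=
      Finset.sum_le_sum fun u _ ↦ logTail_le_self (weight_nonneg _ u) (weight_le_half u)
    linarith
  · have h1 := exp_le_half (t := -|b| - 5 + 2) (by linarith)
    have h2 := exp_le_half (t := b + (-|b| - 5)) (by linarith)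
    have h3 := Real.exp_pos (-|b| - 5)
    rw [leafCorrection]
    linarith

end FunctionalEquation

end TreeIsoClass

namespace TreeIsoClass

open Filter Topology Metric

variable {p q : ℝ × ℝ}

lemma norm_exponent_le (u : TreeIsoClass) : ‖u.exponent‖ ≤ 2 * u.size := by
  have hle : (u.leaves : ℝ) ≤ u.size := by exact_mod_cast u.leaves_le_size
  calc ‖u.exponent‖
      ≤ ‖(u.leaves : ℝ) • ContinuousLinearMap.fst ℝ ℝ ℝ‖ +
          ‖(u.size : ℝ) • ContinuousLinearMap.snd ℝ ℝ ℝ‖ := norm_add_le _ _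
    _ ≤ u.leaves * 1 + u.size * 1 := by
        rw [norm_smul, norm_smul, Real.norm_natCast, Real.norm_natCast]
        gcongr
        · exact ContinuousLinearMap.norm_fst_le ℝ ℝ ℝ
        · exact ContinuousLinearMap.norm_snd_le ℝ ℝ ℝ
    _ ≤ 2 * u.size := by linarith

/-- The derivative of `p ↦ logTail (weight p u)`. -/
noncomputable def logTailFDeriv (p : ℝ × ℝ) (u : TreeIsoClass) : ℝ × ℝ →L[ℝ] ℝ :=
  (weight p u / (1 - weight p u) * weight p u) • u.exponent

lemma hasFDerivAt_logTail_weight {u : TreeIsoClass} (h : weight p u < 1) :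
    HasFDerivAt (fun p ↦ logTail (weight p u)) (logTailFDeriv p u) p := by
  have hweight : HasFDerivAt (weight · u) (weight p u • u.exponent) p :=
    u.exponent.hasFDerivAt.exp
  exact ((hasDerivAt_logTail h).comp_hasFDerivAt p hweight).congr_fderiv (smul_smul _ _ _)

lemma logTailFDeriv_nonneg {u : TreeIsoClass} (h : weight p u < 1) :
    0 ≤ logTailFDeriv p u (0, 1) := by
  have : u.exponent (0, 1) = u.size := by simp [exponent_apply]
  rw [logTailFDeriv, smul_apply, this, smul_eq_mul]
  have h0 := weight_nonneg p u
  exact mul_nonneg (mul_nonneg (div_nonneg h0 (sub_pos.2 h).le) h0) u.size.cast_nonneg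

section Domination

variable {c : ℝ}

lemma exponent_le_of_mem_ball (hp : p ∈ ball q (c / 8)) (u : TreeIsoClass) :
    u.exponent p ≤ u.exponent q + u.size * (c / 4) := by
  have hnorm : ‖p - q‖ ≤ c / 8 := (mem_ball_iff_norm.1 hp).le
  have : u.exponent p - u.exponent q ≤ u.size * (c / 4) :=
    calc u.exponent p - u.exponent q = u.exponent (p - q) := (map_sub _ _ _).symm
      _ ≤ ‖u.exponent‖ * ‖p - q‖ := (Real.le_norm_self _).trans (u.exponent.le_opNorm _)
      _ ≤ 2 * u.size * (c / 8) := by gcongr; exact norm_exponent_le u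
      _ = u.size * (c / 4) := by ring
  linarith

variable (hc : 0 < c) (h2 : q.2 ≤ -c) (h12 : q.1 + q.2 ≤ -c)
include hc h2 h12

lemma weight_le_of_mem_ball (hp : p ∈ ball q (c / 8)) (u : TreeIsoClass) :
    weight p u ≤ Real.exp (-(3 * c / 4)) := by
  have hsize : (1 : ℝ) ≤ u.size := by exact_mod_cast u.one_le_size
  have hp := exponent_le_of_mem_ball hp u
  have hq := exponent_le h2 h12 u
  refine Real.exp_le_exp.2 ?_
  nlinarith

lemma weight_sq_mul_size_le (hp : p ∈ ball q (c / 8)) (u : TreeIsoClass) :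
    weight p u ^ 2 * u.size ≤ weight q u * (2 / c) := by
  have weight_sq_le : weight p u ^ 2 ≤ weight q u * Real.exp (-(u.size * c / 2)) := by
    have hp := exponent_le_of_mem_ball hp u
    have hq := exponent_le h2 h12 u
    rw [weight, weight, ← Real.exp_nat_mul, ← Real.exp_add, Real.exp_le_exp, Nat.cast_ofNat]
    linarith
  have exp_mul_size_le : Real.exp (-(u.size * c / 2)) * u.size ≤ 2 / c := by
    have := Real.add_one_le_exp (u.size * c / 2)
    rw [Real.exp_neg, inv_mul_le_iff₀ (Real.exp_pos _), mul_div_assoc', le_div_iff₀ hc]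
    linarith
  calc weight p u ^ 2 * u.size
      ≤ weight q u * Real.exp (-(u.size * c / 2)) * u.size := by gcongr
    _ = weight q u * (Real.exp (-(u.size * c / 2)) * u.size) := mul_assoc _ _ _
    _ ≤ weight q u * (2 / c) := by gcongr; exact weight_nonneg q u

lemma norm_logTailFDeriv_le (hp : p ∈ ball q (c / 8)) (u : TreeIsoClass) :
    ‖logTailFDeriv p u‖ ≤ weight q u * (2 / c) * (2 / (1 - Real.exp (-(3 * c / 4)))) := by
  have hle := weight_le_of_mem_ball hc h2 h12 hp u
  have h1 : 0 < 1 - Real.exp (-(3 * c / 4)) := sub_pos.2 (Real.exp_lt_one_iff.2 (by linarith))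
  have h1' : 0 < 1 - weight p u := by linarith
  have h0 := weight_nonneg p u
  calc ‖logTailFDeriv p u‖
      = weight p u / (1 - weight p u) * weight p u * ‖u.exponent‖ := by
        rw [logTailFDeriv, norm_smul, Real.norm_of_nonneg (by positivity)]
    _ ≤ weight p u / (1 - Real.exp (-(3 * c / 4))) * weight p u * (2 * u.size) := by
        gcongr
        exact norm_exponent_le u
    _ = weight p u ^ 2 * u.size * (2 / (1 - Real.exp (-(3 * c / 4)))) := by ring
    _ ≤ _ := mul_le_mul_of_nonneg_right (weight_sq_mul_size_le hc h2 h12 hp u)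
        (div_nonneg two_pos.le h1.le)

end Domination

/-- The squared weights in `logTailFDeriv` decay geometrically faster than the weights themselves,
which absorbs both the factor `size` and the displacement from `q` to `p`. -/
lemma exists_ball_norm_logTailFDeriv_le (h : Summable (weight q)) :
    ∃ δ > 0, ∃ v : TreeIsoClass → ℝ, Summable v ∧
      ∀ u, ∀ p ∈ ball q δ, weight p u < 1 ∧ ‖logTailFDeriv p u‖ ≤ v u := by
  let c := -max q.2 (q.1 + q.2)
  have hc : 0 < c := neg_pos.2
    (max_lt (snd_neg_of_summable_weight h) (fst_add_snd_neg_of_summable_weight h))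
  have h2 : q.2 ≤ -c := (le_max_left _ _).trans_eq (neg_neg _).symm
  have h12 : q.1 + q.2 ≤ -c := (le_max_right _ _).trans_eq (neg_neg _).symm
  refine ⟨c / 8, by positivity, _, (h.mul_right (2 / c)).mul_right _, fun u p hp ↦
    ⟨(weight_le_of_mem_ball hc h2 h12 hp u).trans_lt ?_, norm_logTailFDeriv_le hc h2 h12 hp u⟩⟩
  exact Real.exp_lt_one_iff.2 (by linarith)

lemma hasFDerivAt_logTailSum (h : Summable (weight q)) :
    HasFDerivAt logTailSum (∑' u, logTailFDeriv q u) q := by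
  obtain ⟨δ, hδ, v, hv, hball⟩ := exists_ball_norm_logTailFDeriv_le h
  exact hasFDerivAt_tsum_of_isPreconnected hv isOpen_ball (convex_ball q δ).isPreconnected
    (fun u p hp ↦ hasFDerivAt_logTail_weight (hball u p hp).1) (fun u p hp ↦ (hball u p hp).2)
    (mem_ball_self hδ) (summable_logTail h) (mem_ball_self hδ)

lemma eventually_summable_logTail_weight (h : Summable (weight q)) :
    ∀ᶠ p in 𝓝 q, Summable fun u ↦ logTail (weight p u) := by
  obtain ⟨δ, hδ, v, hv, hball⟩ := exists_ball_norm_logTailFDeriv_le h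
  filter_upwards [ball_mem_nhds q hδ] with p hp
  exact summable_of_summable_hasFDerivAt_of_isPreconnected (f := fun u p ↦ logTail (weight p u))
    hv isOpen_ball (convex_ball q δ).isPreconnected
    (fun u p hp ↦ hasFDerivAt_logTail_weight (hball u p hp).1) (fun u p hp ↦ (hball u p hp).2)
    (mem_ball_self hδ) (summable_logTail h) hp

lemma tsum_logTailFDeriv_nonneg (h : Summable (weight q)) :
    0 ≤ (∑' u, logTailFDeriv q u) (0, 1) := by
  obtain ⟨δ, hδ, v, hv, hball⟩ := exists_ball_norm_logTailFDeriv_le h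
  have hsummable : Summable (logTailFDeriv q) :=
    hv.of_norm_bounded fun u ↦ (hball u q (mem_ball_self hδ)).2
  exact (hsummable.hasSum.mapL (.apply ℝ ℝ (0, 1))).nonneg fun u ↦
    logTailFDeriv_nonneg (hball u q (mem_ball_self hδ)).1

theorem exists_hasFDerivAt_excess (h : Summable (weight q)) :
    ∃ L : ℝ × ℝ →L[ℝ] ℝ, HasFDerivAt excess L q ∧ 0 < L (0, 1) := by
  have hfst : HasFDerivAt Prod.fst (.fst ℝ ℝ ℝ) q := hasFDerivAt_fst
  have hsnd : HasFDerivAt Prod.snd (.snd ℝ ℝ ℝ) q := hasFDerivAt_snd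
  refine ⟨_, ((hsnd.add_const 1).add ((hfst.add hsnd).exp.sub hsnd.exp)).add
    (hasFDerivAt_logTailSum h), ?_⟩
  have hx := Real.exp_lt_one_iff.2 (snd_neg_of_summable_weight h)
  have hxz := Real.exp_pos (q.1 + q.2)
  have := tsum_logTailFDeriv_nonneg h
  simp only [add_apply, sub_apply, smul_apply, ContinuousLinearMap.coe_fst',
    ContinuousLinearMap.coe_snd', smul_eq_mul, zero_add, mul_one, Pi.add_apply]
  linarith

end TreeIsoClass

namespace TreeIsoClass

open Filter Topology

lemma convexOn_weight (u : TreeIsoClass) : ConvexOn ℝ Set.univ (weight · u) :=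
  convexOn_exp.comp_linearMap u.exponent.toLinearMap

lemma convex_summable_weight : Convex ℝ {p | Summable (weight p)} :=
  fun p hp q hq _ _ hs ht hst ↦ .of_nonneg_of_le (weight_nonneg _)
    (fun u ↦ (convexOn_weight u).2 (Set.mem_univ p) (Set.mem_univ q) hs ht hst)
    ((hp.mul_left _).add (hq.mul_left _))

lemma treeSum_sub_leafCorrection_eq_exp_add_tsum {p : ℝ × ℝ} (h : Summable (weight p)) :
    treeSum p - leafCorrection p = Real.exp p.2 + ∑' u : {u // u ≠ graft 0}, weight p u := by
  have hsplit : weight p (graft 0) + ∑' u : {u // u ≠ graft 0}, weight p u = treeSum p := by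
    rw [← tsum_singleton (graft 0) (weight p)]
    exact h.tsum_subtype_add_tsum_subtype_compl {graft 0}
  rw [← hsplit, weight_graft_zero, leafCorrection]
  ring

lemma exists_exponent_ne {p q : ℝ × ℝ} (hpq : p ≠ q) :
    ∃ u : {u // u ≠ graft 0}, u.1.exponent p ≠ u.1.exponent q := by
  have path_ne : ∀ k, path (k + 1) ≠ graft 0 := fun k hk ↦ by
    simpa [size_path, size_graft] using congrArg size hk
  by_contra! heq
  have h1 := heq ⟨path 1, path_ne 0⟩
  have h2 := heq ⟨path 2, path_ne 1⟩
  simp only [exponent_apply, size_path, leaves_path] at h1 h2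
  push_cast at h1 h2
  exact hpq (Prod.ext (by linarith) (by linarith))

lemma strictConvexOn_treeSum_sub_leafCorrection :
    StrictConvexOn ℝ {p | Summable (weight p)} fun p ↦ treeSum p - leafCorrection p := by
  refine ⟨convex_summable_weight, fun p hp q hq hpq s t hs ht hst ↦ ?_⟩
  have hmid := convex_summable_weight hp hq hs.le ht.le hst
  obtain ⟨u, hu⟩ := exists_exponent_ne hpq
  have tsum_lt : ∑' u : {u // u ≠ graft 0}, weight (s • p + t • q) u <
      s * ∑' u : {u // u ≠ graft 0}, weight p u + t * ∑' u : {u // u ≠ graft 0}, weight q u := by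
    have hsp : Summable fun v : {u // u ≠ graft 0} ↦ s * weight p v := (hp.subtype _).mul_left s
    have htq : Summable fun v : {u // u ≠ graft 0} ↦ t * weight q v := (hq.subtype _).mul_left t
    rw [← tsum_mul_left, ← tsum_mul_left, ← hsp.tsum_add htq]
    refine (hmid.subtype {u | u ≠ graft 0}).tsum_lt_tsum (i := u)
      (fun v ↦ (convexOn_weight v).2 (Set.mem_univ p) (Set.mem_univ q) hs.le ht.le hst) ?_
      (hsp.add htq)
    simpa [weight] using strictConvexOn_exp.2 (Set.mem_univ _) (Set.mem_univ _) hu hs ht hst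
  have exp_le : Real.exp (s • p + t • q).2 ≤ s * Real.exp p.2 + t * Real.exp q.2 :=
    convexOn_exp.2 (Set.mem_univ p.2) (Set.mem_univ q.2) hs.le ht.le hst
  simp only [treeSum_sub_leafCorrection_eq_exp_add_tsum hmid,
    treeSum_sub_leafCorrection_eq_exp_add_tsum hp, treeSum_sub_leafCorrection_eq_exp_add_tsum hq,
    smul_eq_mul]
  linarith

section LogRadius

/-- The radius of convergence on a logarithmic scale, `log z ↦ log (r z)`. -/
noncomputable def logRadius (b : ℝ) : ℝ := sSup {a | Summable (weight (b, a))}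

lemma le_logRadius {a b : ℝ} (h : Summable (weight (b, a))) : a ≤ logRadius b :=
  le_csSup ⟨0, fun _ h ↦ (snd_neg_of_summable_weight h).le⟩ h

lemma summable_weight_of_lt_logRadius {a b : ℝ} (h : a < logRadius b) :
    Summable (weight (b, a)) := by
  have hne : {a | Summable (weight (b, a))}.Nonempty := ⟨_, summable_weight_neg_abs_sub b⟩
  obtain ⟨a', ha', hlt⟩ := exists_lt_of_lt_csSup hne h
  refine .of_nonneg_of_le (weight_nonneg _) (fun u ↦ Real.exp_le_exp.2 ?_) ha'
  rw [exponent_apply, exponent_apply]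
  gcongr

theorem summable_weight_logRadius (b : ℝ) : Summable (weight (b, logRadius b)) := by
  refine summable_of_sum_le (weight_nonneg _) (c := 1 - 2 * (logRadius b - 1)) fun s ↦ ?_
  have hcont : Continuous fun a ↦ ∑ u ∈ s, weight (b, a) u := by
    unfold weight
    fun_prop
  refine le_of_tendsto (x := 𝓝[<] logRadius b) (hcont.tendsto _ |>.mono_left nhdsWithin_le_nhds) ?_
  filter_upwards [Ioo_mem_nhdsLT (sub_one_lt (logRadius b))] with a ⟨hlow, hlt⟩
  have hsummable := summable_weight_of_lt_logRadius hlt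
  calc ∑ u ∈ s, weight (b, a) u ≤ treeSum (b, a) :=
        hsummable.sum_le_tsum s fun u _ ↦ weight_nonneg _ u
    _ ≤ 1 - 2 * a := treeSum_le hsummable
    _ ≤ 1 - 2 * (logRadius b - 1) := by gcongr

lemma eventually_summable_weight {q : ℝ × ℝ} (h : Summable (weight q)) (hq : excess q < 0) :
    ∀ᶠ p in 𝓝 q, Summable (weight p) := by
  obtain ⟨L, hL, -⟩ := exists_hasFDerivAt_excess h
  filter_upwards [eventually_summable_logTail_weight h, hL.continuousAt.eventually_lt_const hq,
    continuousAt_snd.eventually_lt_const (snd_neg_of_summable_weight h),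
    (continuousAt_fst.add continuousAt_snd).eventually_lt_const
      (fst_add_snd_neg_of_summable_weight h)] with p hlogTail hexcess h2 h12
  exact summable_weight_of_excess_nonpos h2 h12 hlogTail hexcess.le

theorem excess_logRadius (b : ℝ) : excess (b, logRadius b) = 0 := by
  have hsummable := summable_weight_logRadius b
  refine (excess_nonpos hsummable).eq_of_not_lt fun hneg ↦ ?_
  have hcurve : ContinuousAt (fun a : ℝ ↦ (b, a)) (logRadius b) := by fun_prop
  have hright : ∀ᶠ a in 𝓝[>] logRadius b, Summable (weight (b, a)) :=
    (hcurve.eventually (eventually_summable_weight hsummable hneg)).filter_mono nhdsWithin_le_nhds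
  obtain ⟨a, ha, hlt⟩ := (hright.and self_mem_nhdsWithin).exists
  exact (le_logRadius ha).not_gt hlt

theorem strictConcaveOn_logRadius : StrictConcaveOn ℝ Set.univ logRadius := by
  have eq_one : ∀ b, treeSum (b, logRadius b) - leafCorrection (b, logRadius b) = 1 := fun b ↦
    sub_eq_iff_eq_add.2
      (treeSum_of_excess_eq_zero (summable_weight_logRadius b) (excess_logRadius b))
  refine ⟨convex_univ, fun b₁ _ b₂ _ hb s t hs ht hst ↦ ?_⟩
  have h₁ := summable_weight_logRadius b₁
  have h₂ := summable_weight_logRadius b₂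
  have lt_one := strictConvexOn_treeSum_sub_leafCorrection.2 h₁ h₂ (mt (congrArg Prod.fst) hb)
    hs ht hst
  simp only [eq_one, smul_eq_mul, mul_one, hst] at lt_one
  refine (le_logRadius (convex_summable_weight h₁ h₂ hs.le ht.le hst)).lt_of_ne fun heq ↦ ?_
  have on_curve : s • (b₁, logRadius b₁) + t • (b₂, logRadius b₂) =
      (s • b₁ + t • b₂, logRadius (s • b₁ + t • b₂)) := Prod.ext rfl heq
  rw [on_curve] at lt_one
  exact lt_one.ne (eq_one _)

lemma continuous_logRadius : Continuous logRadius :=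
  strictConcaveOn_logRadius.concaveOn.locallyLipschitz.continuous

theorem differentiable_logRadius : Differentiable ℝ logRadius := fun b ↦ by
  obtain ⟨L, hL, hpos⟩ := exists_hasFDerivAt_excess (summable_weight_logRadius b)
  refine (hasFDerivAt_of_implicit hL hpos.ne' continuous_logRadius.continuousAt
    (.of_forall fun c ↦ ?_)).differentiableAt
  rw [excess_logRadius, excess_logRadius]

end LogRadius

section LogRhat

/-- The function `log (r̂ z) = log (r z * √z)` of `b = log z`. -/
noncomputable def logRhat (b : ℝ) : ℝ := logRadius b + b / 2

lemma differentiable_logRhat : Differentiable ℝ logRhat :=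
  differentiable_logRadius.add (differentiable_id.div_const 2)

lemma strictConcaveOn_logRhat : StrictConcaveOn ℝ Set.univ logRhat :=
  strictConcaveOn_logRadius.add_concaveOn ⟨convex_univ, fun b₁ _ b₂ _ s t _ _ _ ↦ by
    simp only [smul_eq_mul]
    exact le_of_eq (by ring)⟩

lemma logRhat_le (b : ℝ) : logRhat b ≤ -(|b| / 2) := by
  have h2 := snd_neg_of_summable_weight (summable_weight_logRadius b)
  have h12 := fst_add_snd_neg_of_summable_weight (summable_weight_logRadius b)
  rw [logRhat]
  rcases abs_cases b with ⟨h, _⟩ | ⟨h, _⟩ <;> rw [h] <;> linarith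

lemma exists_forall_logRhat_le : ∃ b₀, ∀ b, logRhat b ≤ logRhat b₀ := by
  refine differentiable_logRhat.continuous.exists_forall_ge ?_
  refine tendsto_atBot_mono logRhat_le (tendsto_neg_atTop_atBot.comp ?_)
  exact (tendsto_norm_cocompact_atTop (E := ℝ)).atTop_div_const two_pos

end LogRhat

end TreeIsoClass

namespace TreeIsoClass

lemma weight_eq_exp_pow_mul (a b : ℝ) (u : TreeIsoClass) :
    weight (b, a) u = Real.exp a ^ u.size * Real.exp b ^ u.leaves := by
  rw [weight, exponent_apply, Real.exp_add, Real.exp_nat_mul, Real.exp_nat_mul, mul_comm]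

lemma summable_aCount_exp_iff (a b : ℝ) :
    Summable (fun p : ℕ × ℕ ↦ (aCount p.1 p.2 : ℝ) * Real.exp a ^ p.1 * Real.exp b ^ p.2) ↔
      Summable (weight (b, a)) := by
  rw [summable_aCount_iff (Real.exp_nonneg a) (Real.exp_nonneg b)]
  exact summable_congr fun u ↦ (weight_eq_exp_pow_mul a b u).symm

end TreeIsoClass

open TreeIsoClass

lemma rFun_exp (b : ℝ) : rFun (Real.exp b) = Real.exp (logRadius b) := by
  refine IsGreatest.csSup_eq ⟨⟨Real.exp_pos _,
    (summable_aCount_exp_iff _ _).2 (summable_weight_logRadius b)⟩, ?_⟩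
  rintro x ⟨hx, hsummable⟩
  rw [← Real.exp_log hx, summable_aCount_exp_iff] at hsummable
  exact (Real.log_le_iff_le_exp hx).1 (le_logRadius hsummable)

lemma rhat_exp (b : ℝ) : rhat (Real.exp b) = Real.exp (logRhat b) := by
  rw [rhat, rFun_exp, Real.sqrt_eq_rpow, ← Real.exp_mul, ← Real.exp_add, logRhat, mul_one_div]

lemma rhat_eq_exp_logRhat_log {ζ : ℝ} (hζ : 0 < ζ) : rhat ζ = Real.exp (logRhat (Real.log ζ)) := by
  rw [← rhat_exp, Real.exp_log hζ]

lemma deriv_rhat {ζ : ℝ} (hζ : 0 < ζ) :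
    deriv rhat ζ = rhat ζ * (deriv logRhat (Real.log ζ) * ζ⁻¹) := by
  have hexp := ((differentiable_logRhat (Real.log ζ)).hasDerivAt.comp ζ
    (Real.hasDerivAt_log hζ.ne')).exp
  rw [rhat_eq_exp_logRhat_log hζ]
  refine (hexp.congr_of_eventuallyEq ?_).deriv
  filter_upwards [lt_mem_nhds hζ] with η hη using rhat_eq_exp_logRhat_log hη

lemma deriv_rhat_eq_zero_iff {ζ : ℝ} (hζ : 0 < ζ) :
    deriv rhat ζ = 0 ↔ deriv logRhat (Real.log ζ) = 0 := by
  rw [deriv_rhat hζ, rhat_eq_exp_logRhat_log hζ]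
  simp only [mul_eq_zero, Real.exp_ne_zero, inv_eq_zero, hζ.ne', false_or, or_false]

/-- Lemma 4: `r̂` has exactly one critical point on `(0,∞)`, and at this point
it attains its global maximum over `(0,∞)`. -/
theorem lemma4 :
    ∃ ζ₀ : ℝ, 0 < ζ₀ ∧ deriv rhat ζ₀ = 0 ∧
      (∀ ζ : ℝ, 0 < ζ → deriv rhat ζ = 0 → ζ = ζ₀) ∧
      (∀ ζ : ℝ, 0 < ζ → rhat ζ ≤ rhat ζ₀) := by
  obtain ⟨b₀, hmax⟩ := exists_forall_logRhat_le
  have critical : deriv logRhat b₀ = 0 := IsLocalMax.deriv_eq_zero (.of_forall hmax)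
  have deriv_injective : Set.InjOn (deriv logRhat) Set.univ :=
    (strictConcaveOn_logRhat.strictAntiOn_deriv fun b _ ↦ differentiable_logRhat b).injOn
  refine ⟨Real.exp b₀, Real.exp_pos b₀, ?_, fun ζ hζ h ↦ ?_, fun ζ hζ ↦ ?_⟩
  · rwa [deriv_rhat_eq_zero_iff (Real.exp_pos b₀), Real.log_exp]
  · have hlog : Real.log ζ = b₀ := deriv_injective (Set.mem_univ _) (Set.mem_univ _)
      (((deriv_rhat_eq_zero_iff hζ).1 h).trans critical.symm)
    rw [← hlog, Real.exp_log hζ]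
  · rw [rhat_eq_exp_logRhat_log hζ, rhat_exp]
    exact Real.exp_le_exp.2 (hmax _)
end

section
/- Let a_n^+ := Σ_{k > n/2} a_{n,k} denote the number of rooted trees with n vertices more than half of whose vertices are leaves. Then for all integers n, m ≥ 1 one has a_n^+ · a_m^+ ≤ 2 · a_{n+m+2}^+. -/
open SimpleGraph

/-- `a_n^+ = Σ_{k > n/2} a_{n,k}`: the number of rooted trees with `n`
vertices more than half of whose vertices are leaves. -/
noncomputable def aPlusN (n : ℕ) : ℕ :=
  Nat.card (Quotient (Setoid.comap
    (Subtype.val : {t : RTree n // n < 2 * numLeaves t} → RTree n)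
    (treeSetoid n)))

/-!
Join trees `a` and `b`, of sizes `n` and `m`, and a one-vertex tree to a common new root. The result
has `n + m + 2` vertices and at least `numLeaves a + numLeaves b + 1` leaves, so more than half of
its vertices are leaves if this holds for `a` and for `b`. It determines the multiset of its
branches up to isomorphism, hence, on removing the one-vertex branch, the unordered pair `{a, b}`;
and an unordered pair arises from at most two ordered ones.
-/

theorem card_mul_card_le_two_mul_card_of_sym2 {α β γ δ : Type*} [Finite α] [Finite β] [Finite γ]
    {f : α → δ} {g : β → δ} (hf : Function.Injective f) (hg : Function.Injective g)
    {F : α × β → γ}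
    (hF : ∀ p q, F p = F q → s(f p.1, g p.2) = s(f q.1, g q.2)) :
    Nat.card α * Nat.card β ≤ 2 * Nat.card γ := by
  classical
  have := Fintype.ofFinite α
  have := Fintype.ofFinite β
  have := Fintype.ofFinite γ
  have fiber_card (c : γ) (hc : c ∈ Finset.univ.image F) :
      (Finset.univ.filter fun q => F q = c).card ≤ 2 := by
    obtain ⟨p, -, rfl⟩ := Finset.mem_image.1 hc
    set x := Prod.map f g p
    calc (Finset.univ.filter fun q => F q = F p).card
        = ((Finset.univ.filter fun q => F q = F p).image (Prod.map f g)).card :=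
          (Finset.card_image_of_injective _ (hf.prodMap hg)).symm
      _ ≤ ({x, x.swap} : Finset (δ × δ)).card := by
          refine Finset.card_le_card fun y hy => ?_
          obtain ⟨q, hq, rfl⟩ := Finset.mem_image.1 hy
          simpa using Sym2.mk_eq_mk_iff.1 (hF q p (Finset.mem_filter.1 hq).2)
      _ ≤ 2 := Finset.card_le_two
  calc Nat.card α * Nat.card β = (Finset.univ : Finset (α × β)).card := by
        simp [Fintype.card_prod]
    _ ≤ 2 * (Finset.univ.image F).card := Finset.card_le_mul_card_image _ 2 fiber_card
    _ ≤ 2 * Nat.card γ := by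
        rw [Nat.card_eq_fintype_card]
        exact Nat.mul_le_mul_left 2 (Finset.card_le_univ _)

theorem reachable_map_of_forall_adj {V W : Type*} {G : SimpleGraph V} {H : SimpleGraph W}
    {f : V → W} (hf : ∀ ⦃u v⦄, G.Adj u v → H.Reachable (f u) (f v)) {u v : V}
    (huv : G.Reachable u v) : H.Reachable (f u) (f v) := by
  simp only [reachable_iff_reflTransGen] at huv hf ⊢
  exact huv.lift' f hf

theorem mem_of_reachable {V : Type*} {G : SimpleGraph V} {S : Set V}
    (hS : ∀ ⦃u v⦄, G.Adj u v → u ∈ S → v ∈ S) {u v : V} (huv : G.Reachable u v) (hu : u ∈ S) :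
    v ∈ S := by
  rw [reachable_iff_reflTransGen] at huv
  induction huv with
  | refl => exact hu
  | tail _ hadj hmem => exact hS hadj hmem

theorem exists_iso_of_range_eq {U V W : Type*} {G : SimpleGraph U} {H : SimpleGraph V}
    {K : SimpleGraph W} (f : G ↪g K) (g : H ↪g K) (h : Set.range f = Set.range g) :
    ∃ φ : G ≃g H, ∀ u, g (φ u) = f u := by
  let φ : U ≃ V := (Equiv.ofInjective f f.injective).trans
    ((Equiv.setCongr h).trans (Equiv.ofInjective g g.injective).symm)
  have hφ (u : U) : g (φ u) = f u := Equiv.apply_ofInjective_symm g.injective _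
  refine ⟨⟨φ, fun {u v} => ?_⟩, hφ⟩
  rw [← g.map_adj_iff, hφ, hφ, f.map_adj_iff]

section RootJoin

variable {ι κ : Type*} {V : ι → Type*} {W : κ → Type*}

/-- Adjacency in `rootJoin G r`. -/
inductive RootJoinAdj (G : ∀ i, SimpleGraph (V i)) (r : ∀ i, V i) :
    Option (Σ i, V i) → Option (Σ i, V i) → Prop
  | down (i : ι) : RootJoinAdj G r none (some ⟨i, r i⟩)
  | up (i : ι) : RootJoinAdj G r (some ⟨i, r i⟩) none
  | branch (i : ι) {x y : V i} (h : (G i).Adj x y) : RootJoinAdj G r (some ⟨i, x⟩) (some ⟨i, y⟩)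

/-- The graph with a new vertex `none` joined by an edge to the root `r i` of each of the rooted
graphs `G i`, which are called the branches. On rooted trees this is the grafting operator `B₊`. -/
def rootJoin (G : ∀ i, SimpleGraph (V i)) (r : ∀ i, V i) : SimpleGraph (Option (Σ i, V i)) where
  Adj := RootJoinAdj G r
  symm.symm
    | _, _, .down i => .up i
    | _, _, .up i => .down i
    | _, _, .branch i h => .branch i h.symm
  loopless.irrefl
    | some _, .branch i h => (G i).irrefl h

variable {G : ∀ i, SimpleGraph (V i)} {r : ∀ i, V i}
  {H : ∀ j, SimpleGraph (W j)} {s : ∀ j, W j}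

theorem rootJoin_adj_some_some {i : ι} {x y : V i} :
    (rootJoin G r).Adj (some ⟨i, x⟩) (some ⟨i, y⟩) ↔ (G i).Adj x y where
  mp h := by
    cases h with
    | branch _ h => exact h
  mpr := .branch i

theorem exists_eq_root_of_rootJoin_adj_none {v : Option (Σ i, V i)}
    (h : (rootJoin G r).Adj none v) :
    ∃ i, v = some ⟨i, r i⟩ := by
  cases h with
  | down i => exact ⟨i, rfl⟩

/-- The inclusion of the branch `G i` into `rootJoin G r`. -/
def branchEmb (G : ∀ i, SimpleGraph (V i)) (r : ∀ i, V i) (i : ι) : G i ↪g rootJoin G r where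
  toFun x := some ⟨i, x⟩
  inj' := (Option.some_injective _).comp sigma_mk_injective
  map_rel_iff' := rootJoin_adj_some_some

theorem rootJoin_connected (hG : ∀ i, (G i).Preconnected) : (rootJoin G r).Connected := by
  rw [connected_iff_exists_forall_reachable]
  refine ⟨none, ?_⟩
  rintro (_ | ⟨i, x⟩)
  · rfl
  · have root_adj : (rootJoin G r).Adj none (some ⟨i, r i⟩) := .down i
    exact root_adj.reachable.trans ((hG i (r i) x).map (branchEmb G r i).toHom)

/-- The retraction of `rootJoin G r` onto the branch `G i` which sends everything outside that
branch to `r i`. -/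
noncomputable def branchRetract (r : ∀ i, V i) (i : ι) : Option (Σ i, V i) → V i :=
  Function.extend (fun x : V i => some ⟨i, x⟩) id fun _ => r i

theorem branchRetract_some_self (i : ι) (x : V i) : branchRetract r i (some ⟨i, x⟩) = x :=
  ((Option.some_injective _).comp sigma_mk_injective).extend_apply _ _ x

theorem branchRetract_none (i : ι) : branchRetract r i none = r i :=
  Function.extend_apply' _ _ _ (by simp)

theorem branchRetract_some_of_ne {i j : ι} (hij : i ≠ j) (x : V j) :
    branchRetract r i (some ⟨j, x⟩) = r i :=
  Function.extend_apply' _ _ _ fun ⟨_, hy⟩ => hij (congrArg Sigma.fst (Option.some_injective _ hy))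

theorem branchRetract_root (i j : ι) : branchRetract r i (some ⟨j, r j⟩) = r i := by
  obtain rfl | hij := eq_or_ne i j
  · exact branchRetract_some_self i (r i)
  · exact branchRetract_some_of_ne hij (r j)

theorem reachable_branchRetract_of_adj {i : ι} {x y : V i} {u v : Option (Σ i, V i)}
    (h : ((rootJoin G r).deleteEdges {s(some ⟨i, x⟩, some ⟨i, y⟩)}).Adj u v) :
    ((G i).deleteEdges {s(x, y)}).Reachable (branchRetract r i u) (branchRetract r i v) := by
  obtain ⟨huv, hne⟩ := deleteEdges_adj.1 h
  cases huv with
  | down j => rw [branchRetract_none, branchRetract_root]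
  | up j => rw [branchRetract_none, branchRetract_root]
  | branch j hadj =>
    obtain rfl | hij := eq_or_ne i j
    · rw [branchRetract_some_self, branchRetract_some_self]
      refine (deleteEdges_adj.2 ⟨hadj, ?_⟩).reachable
      simpa [Sym2.eq_iff] using hne
    · rw [branchRetract_some_of_ne hij, branchRetract_some_of_ne hij]

theorem isBridge_rootJoin_branch {i : ι} {x y : V i} (h : (G i).IsBridge s(x, y)) :
    (rootJoin G r).IsBridge s(some ⟨i, x⟩, some ⟨i, y⟩) := by
  rw [isBridge_iff] at h ⊢
  intro hreach
  apply h
  simpa only [branchRetract_some_self] using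
    reachable_map_of_forall_adj (fun _ _ => reachable_branchRetract_of_adj) hreach

theorem isBridge_rootJoin_root (i : ι) : (rootJoin G r).IsBridge s(none, some ⟨i, r i⟩) := by
  rw [isBridge_iff]
  intro hreach
  let outside : Set (Option (Σ i, V i)) := {v | ∀ x, v ≠ some ⟨i, x⟩}
  have outside_of_adj ⦃u v⦄
      (huv : ((rootJoin G r).deleteEdges {s(none, some ⟨i, r i⟩)}).Adj u v)
      (hu : u ∈ outside) : v ∈ outside := by
    obtain ⟨huv, hne⟩ := deleteEdges_adj.1 huv
    rintro x rfl
    cases huv with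
    | down => exact hne rfl
    | branch _ _ => exact hu _ rfl
  exact mem_of_reachable outside_of_adj hreach (fun _ => nofun) (r i) rfl

theorem rootJoin_isAcyclic (hG : ∀ i, (G i).IsAcyclic) : (rootJoin G r).IsAcyclic := by
  rw [isAcyclic_iff_forall_adj_isBridge]
  intro u v huv
  cases huv with
  | down i => exact isBridge_rootJoin_root i
  | up i => exact Sym2.eq_swap ▸ isBridge_rootJoin_root i
  | branch i hadj =>
    exact isBridge_rootJoin_branch (isAcyclic_iff_forall_adj_isBridge.1 (hG i) hadj)

theorem neighborSet_rootJoin_of_ne_root {i : ι} {x : V i} (hx : x ≠ r i) :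
    (rootJoin G r).neighborSet (some ⟨i, x⟩) = branchEmb G r i '' (G i).neighborSet x := by
  ext v
  constructor
  · intro hv
    cases hv with
    | up => exact absurd rfl hx
    | branch _ h => exact ⟨_, h, rfl⟩
  · rintro ⟨y, hy, rfl⟩
    exact .branch i hy

theorem neighborSet_rootJoin_of_subsingleton (i : ι) [Subsingleton (V i)] (x : V i) :
    (rootJoin G r).neighborSet (some ⟨i, x⟩) = {none} := by
  obtain rfl := Subsingleton.elim (r i) x
  ext v
  constructor
  · intro hv
    cases hv with
    | up => rfl
    | branch _ h => exact absurd (Subsingleton.elim _ _) h.ne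
  · rintro rfl
    exact .up i

theorem range_comp_branchEmb_subset {e : rootJoin G r ≃g rootJoin H s} (he : e none = none)
    {i : ι} {j : κ} (hG : (G i).Preconnected) (hij : e (some ⟨i, r i⟩) = some ⟨j, s j⟩) :
    Set.range (e ∘ branchEmb G r i) ⊆ Set.range (branchEmb H s j) := by
  rintro _ ⟨x, rfl⟩
  let S : Set (V i) := {x | e (some ⟨i, x⟩) ∈ Set.range (branchEmb H s j)}
  refine mem_of_reachable (S := S) ?_ (hG (r i) x) ⟨s j, hij.symm⟩
  rintro a b hab ⟨y, hy⟩
  have hadj : (rootJoin H s).Adj (e (some ⟨i, a⟩)) (e (some ⟨i, b⟩)) :=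
    e.map_adj_iff.2 (.branch i hab)
  have hne : e (some ⟨i, b⟩) ≠ none := fun h => nomatch e.injective (h.trans he.symm)
  change e (some ⟨i, b⟩) ∈ Set.range (branchEmb H s j)
  rw [← hy] at hadj
  generalize e (some ⟨i, b⟩) = v at hadj hne
  cases hadj with
  | up => exact absurd rfl hne
  | branch _ _ => exact ⟨_, rfl⟩

theorem exists_branch_iso {e : rootJoin G r ≃g rootJoin H s} (he : e none = none)
    {i : ι} {j : κ} (hG : (G i).Preconnected) (hH : (H j).Preconnected)
    (hij : e (some ⟨i, r i⟩) = some ⟨j, s j⟩) :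
    ∃ φ : G i ≃g H j, φ (r i) = s j := by
  have he' : e.symm none = none := e.symm_apply_eq.2 he.symm
  have hji : e.symm (some ⟨j, s j⟩) = some ⟨i, r i⟩ := e.symm_apply_eq.2 hij.symm
  have range_eq : Set.range (e.toEmbedding.comp (branchEmb G r i)) =
      Set.range (branchEmb H s j) := by
    refine (range_comp_branchEmb_subset he hG hij).antisymm ?_
    rintro _ ⟨y, rfl⟩
    obtain ⟨x, hx⟩ := range_comp_branchEmb_subset he' hH hji ⟨y, rfl⟩
    exact ⟨x, (e.symm_apply_eq.1 hx.symm).symm⟩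
  obtain ⟨φ, hφ⟩ := exists_iso_of_range_eq _ _ range_eq
  exact ⟨φ, (branchEmb H s j).injective ((hφ (r i)).trans hij)⟩

theorem exists_equiv_branch_iso (e : rootJoin G r ≃g rootJoin H s) (he : e none = none)
    (hG : ∀ i, (G i).Preconnected) (hH : ∀ j, (H j).Preconnected) :
    ∃ σ : ι ≃ κ, ∀ i, ∃ φ : G i ≃g H (σ i), φ (r i) = s (σ i) := by
  have he' : e.symm none = none := e.symm_apply_eq.2 he.symm
  have root_map (i : ι) : ∃ j, e (some ⟨i, r i⟩) = some ⟨j, s j⟩ :=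
    exists_eq_root_of_rootJoin_adj_none (he ▸ e.map_adj_iff.2 (.down i))
  have root_map_symm (j : κ) : ∃ i, e.symm (some ⟨j, s j⟩) = some ⟨i, r i⟩ :=
    exists_eq_root_of_rootJoin_adj_none (he' ▸ e.symm.map_adj_iff.2 (.down j))
  choose σ hσ using root_map
  choose τ hτ using root_map_symm
  have τσ (i : ι) : τ (σ i) = i := by
    have h := (hτ (σ i)).symm.trans (e.symm_apply_eq.2 (hσ i).symm)
    exact congrArg Sigma.fst (Option.some_injective _ h)
  have στ (j : κ) : σ (τ j) = j := by
    have h := (hσ (τ j)).symm.trans (e.symm_apply_eq.1 (hτ j)).symm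
    exact congrArg Sigma.fst (Option.some_injective _ h)
  exact ⟨⟨σ, τ, τσ, στ⟩, fun i => exists_branch_iso he (hG i) (hH (σ i)) (hσ i)⟩

end RootJoin

namespace RTree

/-- The isomorphism classes of rooted trees of all sizes. -/
abbrev IsoClass := Σ n : ℕ, Quotient (treeSetoid n)

/-- The isomorphism class of a rooted tree. -/
def isoClass {n : ℕ} (t : RTree n) : IsoClass := ⟨n, Quotient.mk _ t⟩

theorem isoClass_eq_of_iso {n m : ℕ} {t : RTree n} {u : RTree m} (e : t.adj ≃g u.adj)
    (he : e t.root = u.root) : t.isoClass = u.isoClass := by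
  obtain rfl : n = m := by simpa using Fintype.card_congr e.toEquiv
  exact congrArg (Sigma.mk n) (Quotient.sound ⟨e, he⟩)

theorem equiv_of_isoClass_eq {n : ℕ} {t u : RTree n} (h : t.isoClass = u.isoClass) :
    treeSetoid n t u :=
  Quotient.exact (sigma_mk_injective (β := fun n => Quotient (treeSetoid n)) h)

section Graft

variable {ι : Type*} [Fintype ι] (t : ι → Σ n, RTree n) {N : ℕ} (hN : ∑ i, (t i).1 + 1 = N)

/-- An arbitrary numbering of the vertices of the root join of the trees `t i`. -/
noncomputable def graftEquiv : Option (Σ i, Fin (t i).1) ≃ Fin N :=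
  Finite.equivFinOfCardEq (by simpa using hN)

/-- The rooted tree whose root has the trees `t i` as its branches. -/
noncomputable def graft : RTree N where
  adj := (rootJoin (fun i => (t i).2.adj) fun i => (t i).2.root).map (graftEquiv t hN)
  connected := (Iso.map (graftEquiv t hN) _).connected_iff.1
    (rootJoin_connected fun i => (t i).2.connected.preconnected)
  acyclic := (Iso.map (graftEquiv t hN) _).isAcyclic_iff.1
    (rootJoin_isAcyclic fun i => (t i).2.acyclic)
  root := graftEquiv t hN none

/-- The identification of `graft t hN` with the root join of the trees `t i`. -/
noncomputable def graftIso :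
    rootJoin (fun i => (t i).2.adj) (fun i => (t i).2.root) ≃g (graft t hN).adj :=
  Iso.map (graftEquiv t hN) _

variable {t}

theorem isLeafV_graft {i : ι} {x : Fin (t i).1} (hx : IsLeafV (t i).2 x) :
    IsLeafV (graft t hN) (graftIso t hN (some ⟨i, x⟩)) := by
  refine Or.inr ⟨?_, fun h => nomatch (graftIso t hN).injective h⟩
  rw [← Iso.image_neighborSet, Set.ncard_image_of_injective _ (graftIso t hN).injective]
  obtain hone | ⟨hdeg, hroot⟩ := hx
  · have : Subsingleton (Fin (t i).1) := Fin.subsingleton_iff_le_one.2 hone.le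
    rw [neighborSet_rootJoin_of_subsingleton, Set.ncard_singleton]
  · rw [neighborSet_rootJoin_of_ne_root hroot,
      Set.ncard_image_of_injective _ (branchEmb _ _ i).injective, hdeg]

theorem sum_numLeaves_le_numLeaves_graft :
    ∑ i, numLeaves (t i).2 ≤ numLeaves (graft t hN) := by
  unfold numLeaves
  rw [← Nat.card_sigma]
  refine Nat.card_le_card_of_injective
    (fun p => ⟨graftIso t hN (some ⟨p.1, p.2.1⟩), isLeafV_graft hN p.2.2⟩) ?_
  rintro ⟨i, x, hx⟩ ⟨j, y, hy⟩ h
  cases (graftIso t hN).injective (congrArg Subtype.val h)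
  rfl

theorem map_isoClass_eq_of_graft_equiv {κ : Type*} [Fintype κ] {u : κ → Σ n, RTree n}
    {hN' : ∑ j, (u j).1 + 1 = N}
    (h : treeSetoid N (graft t hN) (graft u hN')) :
    Finset.univ.val.map (fun i => (t i).2.isoClass) =
      Finset.univ.val.map fun j => (u j).2.isoClass := by
  obtain ⟨e, he⟩ := h
  let e' := ((graftIso t hN).trans e).trans (graftIso u hN').symm
  have he' : e' none = none := (graftIso u hN').symm_apply_eq.2 he
  obtain ⟨σ, hσ⟩ := exists_equiv_branch_iso e' he' (fun i => (t i).2.connected.preconnected)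
    fun j => (u j).2.connected.preconnected
  have isoClass_eq (i : ι) : (t i).2.isoClass = (u (σ i)).2.isoClass := by
    obtain ⟨φ, hφ⟩ := hσ i
    exact isoClass_eq_of_iso φ hφ
  simp only [isoClass_eq]
  conv_rhs => rw [← Multiset.map_univ_val_equiv σ, Multiset.map_map]
  rfl

end Graft

/-- The one-vertex rooted tree. -/
def point : RTree 1 where
  adj := ⊥
  connected := IsTree.of_subsingleton.connected
  acyclic := isAcyclic_bot
  root := 0

theorem numLeaves_point : numLeaves point = 1 := by
  simp [numLeaves, IsLeafV]

section GraftPair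

variable {n m : ℕ}

/-- The rooted tree whose root has three branches: a single vertex, `a` and `b`. -/
noncomputable def graftPair (a : RTree n) (b : RTree m) : RTree (n + m + 2) :=
  graft ![⟨1, point⟩, ⟨n, a⟩, ⟨m, b⟩] (by simp [Fin.sum_univ_three]; ring)

theorem numLeaves_add_lt_numLeaves_graftPair (a : RTree n) (b : RTree m) :
    numLeaves a + numLeaves b < numLeaves (graftPair a b) := by
  have h : ∑ i, numLeaves (![⟨1, point⟩, ⟨n, a⟩, ⟨m, b⟩] i : Σ n, RTree n).2 ≤
      numLeaves (graftPair a b) := sum_numLeaves_le_numLeaves_graft _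
  simp only [Fin.sum_univ_three, Matrix.cons_val, numLeaves_point] at h
  omega

theorem isoClass_pair_eq_of_graftPair_equiv {a a' : RTree n} {b b' : RTree m}
    (h : treeSetoid _ (graftPair a b) (graftPair a' b')) :
    s(a.isoClass, b.isoClass) = s(a'.isoClass, b'.isoClass) := by
  have perm : [a.isoClass, b.isoClass].Perm [a'.isoClass, b'.isoClass] := by
    simpa [Fin.univ_val_map] using map_isoClass_eq_of_graft_equiv _ h
  simpa [Sym2.eq_iff] using List.perm_pair.1 perm

end GraftPair

instance (n : ℕ) : Finite (RTree n) :=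
  Finite.of_injective (fun t : RTree n => (t.adj, t.root)) fun ⟨_, _, _, _⟩ ⟨_, _, _, _⟩ h => by
    cases h
    rfl

/-- The isomorphism classes counted by `aPlusN n`. -/
abbrev LeafyClass (n : ℕ) :=
  Quotient (Setoid.comap (Subtype.val : {t : RTree n // n < 2 * numLeaves t} → RTree n)
    (treeSetoid n))

namespace LeafyClass

theorem isoClass_out_injective (n : ℕ) :
    Function.Injective fun c : LeafyClass n => c.out.1.isoClass := fun _ _ h =>
  Quotient.out_equiv_out.1 (equiv_of_isoClass_eq h)

/-- `graftPair` on isomorphism classes, computed on the representatives chosen by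
`Quotient.out`. -/
noncomputable def graftPair {n m : ℕ} (c : LeafyClass n × LeafyClass m) :
    LeafyClass (n + m + 2) :=
  Quotient.mk _ ⟨c.1.out.1.graftPair c.2.out.1, by
    have ha := c.1.out.2
    have hb := c.2.out.2
    have := numLeaves_add_lt_numLeaves_graftPair c.1.out.1 c.2.out.1
    omega⟩

theorem isoClass_pair_eq_of_graftPair_eq {n m : ℕ} {p q : LeafyClass n × LeafyClass m}
    (h : graftPair p = graftPair q) :
    s(p.1.out.1.isoClass, p.2.out.1.isoClass) = s(q.1.out.1.isoClass, q.2.out.1.isoClass) :=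
  isoClass_pair_eq_of_graftPair_equiv
    (Quotient.exact (s := Setoid.comap Subtype.val (treeSetoid (n + m + 2))) h)

end LeafyClass

end RTree

/-- Supermultiplicativity up to a factor 2: `a_n^+ · a_m^+ ≤ 2·a_{n+m+2}^+`. -/
theorem aPlusN_supermultiplicative (n m : ℕ) (hn : 1 ≤ n) (hm : 1 ≤ m) :
    aPlusN n * aPlusN m ≤ 2 * aPlusN (n + m + 2) := by
  change Nat.card (RTree.LeafyClass n) * Nat.card (RTree.LeafyClass m) ≤
    2 * Nat.card (RTree.LeafyClass (n + m + 2))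
  exact card_mul_card_le_two_mul_card_of_sym2 (RTree.LeafyClass.isoClass_out_injective n)
    (RTree.LeafyClass.isoClass_out_injective m)
    fun _ _ => RTree.LeafyClass.isoClass_pair_eq_of_graftPair_eq
end
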